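/- There exist a separable scattered compact Hausdorff space L and a closed linear subspace Y of C(L) which is isomorphic (as a Banach space) to c₀ such that the quotient Banach space C(L)/Y is not a C-space. -/

import Mathlib

open scoped ZeroAtInfty

/-- A Banach space is a *C-space* if it is isomorphic (via a continuous linear
equivalence) to `C(K, ℝ)` for some compact Hausdorff space `K`. -/
def IsCSpace (X : Type*) [NormedAddCommGroup X] [NormedSpace ℝ X] : Prop :=
  ∃ (K : Type) (_ : TopologicalSpace K) (_ : CompactSpace K) (_ : T2Space K),
    Nonempty (X ≃L[ℝ] C(K, ℝ))

/-- A topological space is scattered if every nonempty subset has a point isolated in it. -/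
def IsScatteredSpace (K : Type*) [TopologicalSpace K] : Prop :=
  ∀ S : Set K, S.Nonempty → ∃ x ∈ S, ∃ U : Set K, IsOpen U ∧ U ∩ S = {x}

/-!
Let `L` be the one-point compactification of the Mrówka space of an almost disjoint family of
subsets of `ℕ × Bool`, and let `Y` be the space of functions taking the same value at `(n, true)`
and `(n, false)` for all `n` and constant off the isolated points. A member of the family encodes a
sequence `f x` of signs: it contains `(n, true)` or `(n, false)` according to whether `f x n` is `1`
or `-1`. A functional `μ` on `C(L)` which vanishes on `Y` is odd under exchange of `(n, true)` and
`(n, false)`, so its value at the indicator function of the member `x` is the pairing of `f x` with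
the `ℓ₁` sequence `μ {(n, true)}`, up to a mass at the limit point which is nonzero for only
countably many `x`.

An isomorphism of `C(L)/Y` with some `C(K)` would be given by a surjection `S : C(L) → C(K)`
vanishing on `Y`, and points `κ n` of `K` at which the image of the indicator of `(n, true)` is
large. The functionals `S · (κ n)` then have `ℓ₁` sequences which form the rows of a matrix with a
large diagonal. There are only continuum many such matrices (paired with one recording the
masses), so a transfinite recursion of length continuum produces an almost disjoint family which
diagonalizes against all of them: for each matrix there are an index `x` and three ultrafilters
along which the rows have three different limits at `f x`, but equal limits at every other test.
Each step is possible since each earlier member excludes only countably many of the continuum many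
candidates.

The limits `k (-1)`, `k 0`, `k 1` of the points `κ n` along the ultrafilters are such that
`S g (k i) - S g (k j)` is a multiple, with a factor depending on `g` only, of the difference for
the indicator function `e` of the member `x`. But `S e` is increasing in `i`, so the factor for the
function `|S e - S e (k 0)|` would be both `1` and `-1`.
-/

open Filter Set Topology

universe u

/-! ### Absolute sums and almost disjoint families -/

/-- The absolute sums of `a` over finite sets are at most `M`, that is, `‖a‖₁ ≤ M`. -/
def AbsSumLE {ι : Type*} (M : ℝ) (a : ι → ℝ) : Prop :=
  ∀ F : Finset ι, ∑ i ∈ F, |a i| ≤ M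

namespace AbsSumLE

variable {ι κ : Type*} {M M' : ℝ} {a b : ι → ℝ}

theorem summable (h : AbsSumLE M a) : Summable a :=
  (summable_of_sum_le (fun _ => abs_nonneg _) h).of_abs

theorem abs_apply_le (h : AbsSumLE M a) (i : ι) : |a i| ≤ M := by
  simpa using h {i}

theorem abs_tsum_le (h : AbsSumLE M a) : |∑' i, a i| ≤ M :=
  le_of_tendsto h.summable.hasSum.abs <|
    Eventually.of_forall fun F => (F.abs_sum_le_sum_abs a).trans (h F)

theorem of_abs_le (h : AbsSumLE M a) (hb : ∀ i, |b i| ≤ |a i|) : AbsSumLE M b := fun F =>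
  (Finset.sum_le_sum fun i _ => hb i).trans (h F)

theorem mono (h : AbsSumLE M a) (hM : M ≤ M') : AbsSumLE M' a := fun F => (h F).trans hM

theorem sub (ha : AbsSumLE M a) (hb : AbsSumLE M' b) :
    AbsSumLE (M + M') (fun i => a i - b i) := fun F =>
  calc ∑ i ∈ F, |a i - b i| ≤ ∑ i ∈ F, (|a i| + |b i|) :=
        Finset.sum_le_sum fun i _ => abs_sub (a i) (b i)
    _ ≤ M + M' := by rw [Finset.sum_add_distrib]; exact add_le_add (ha F) (hb F)

theorem of_tendsto {l : Filter κ} [l.NeBot] {u : κ → ι → ℝ} (hu : ∀ k, AbsSumLE M (u k))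
    (h : ∀ i, Tendsto (fun k => u k i) l (𝓝 (a i))) : AbsSumLE M a := fun F =>
  le_of_tendsto (tendsto_finsetSum F fun i _ => (h i).abs) (Eventually.of_forall fun k => hu k F)

theorem comp_injective (h : AbsSumLE M a) {e : κ → ι} (he : e.Injective) :
    AbsSumLE M (a ∘ e) := fun F => by
  simpa using h (F.map ⟨e, he⟩)

end AbsSumLE

/-- The family of sets `B` is almost disjoint: distinct members have finite intersection. -/
class IsAlmostDisjoint {N I : Type*} (B : I → Set N) : Prop where
  finite_inter : Pairwise fun x y => (B x ∩ B y).Finite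

theorem IsAlmostDisjoint.exists_pairwiseDisjoint_sdiff {N I : Type*} {B : I → Set N}
    (hB : IsAlmostDisjoint B) (F : Finset I) :
    ∃ G : Finset N, (F : Set I).PairwiseDisjoint fun y => B y \ G := by
  have hfin : (⋃ y ∈ F, ⋃ z ∈ F, ⋃ _ : y ≠ z, B y ∩ B z).Finite :=
    F.finite_toSet.biUnion fun y _ => F.finite_toSet.biUnion fun z _ =>
      finite_iUnion fun h => hB.finite_inter h
  refine ⟨hfin.toFinset, fun y hy z hz hyz => disjoint_left.mpr fun m hmy hmz => hmy.2 ?_⟩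
  simp only [Finite.coe_toFinset, mem_iUnion]
  exact ⟨y, hy, z, hz, hyz, hmy.1, hmz.1⟩

theorem sum_abs_le_one_of_subsingleton_support {J : Type*} {F : Finset J} {u : J → ℝ}
    (hu : ∀ y ∈ F, |u y| ≤ 1) (hsupp : ∀ y ∈ F, u y ≠ 0 → ∀ z ∈ F, u z ≠ 0 → y = z) :
    ∑ y ∈ F, |u y| ≤ 1 := by
  by_cases hex : ∃ y ∈ F, u y ≠ 0
  · obtain ⟨y, hy, huy⟩ := hex
    rw [Finset.sum_eq_single_of_mem y hy]
    · exact hu y hy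
    · intro z hz hzy
      by_contra huz
      exact hzy (hsupp z hz (abs_ne_zero.mp huz) y hy huy)
  · push Not at hex
    rw [Finset.sum_eq_zero fun y hy => by rw [hex y hy, abs_zero]]
    exact zero_le_one

theorem abs_coe_signType_le_one (s : SignType) : |(s : ℝ)| ≤ 1 := by
  cases s <;> simp

/-- The value at the sign sequence `f` of the functional on bounded sequences given by `a`. -/
noncomputable def pairing (a : ℕ → ℝ) (f : ℕ → SignType) : ℝ := ∑' m, a m * f m

section Pairing

variable {M M' : ℝ} {a b : ℕ → ℝ} {f : ℕ → SignType}

theorem AbsSumLE.mul_sign (h : AbsSumLE M a) (f : ℕ → SignType) :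
    AbsSumLE M (fun m => a m * f m) :=
  h.of_abs_le fun m => by
    rw [abs_mul]
    exact mul_le_of_le_one_right (abs_nonneg _) (abs_coe_signType_le_one _)

theorem abs_pairing_le (h : AbsSumLE M a) (f : ℕ → SignType) : |pairing a f| ≤ M :=
  (h.mul_sign f).abs_tsum_le

theorem pairing_sub_left (ha : AbsSumLE M a) (hb : AbsSumLE M' b) (f : ℕ → SignType) :
    pairing (fun m => a m - b m) f = pairing a f - pairing b f := by
  rw [pairing, pairing, pairing,
    ← (ha.mul_sign f).summable.tsum_sub (hb.mul_sign f).summable]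
  exact tsum_congr fun m => sub_mul _ _ _

variable {ι J : Type*} {g : J → ℕ → SignType}

theorem sum_abs_coe_sign_le_one {F : Finset J} {G : Finset ℕ}
    (hFG : (F : Set J).PairwiseDisjoint fun y => Function.support (g y) \ G) {m : ℕ} (hm : m ∉ G) :
    ∑ y ∈ F, |(g y m : ℝ)| ≤ 1 := by
  refine sum_abs_le_one_of_subsingleton_support (fun y _ => abs_coe_signType_le_one _)
    fun y hy hym z hz hzm => hFG.elim_set hy hz m ⟨fun h => hym ?_, hm⟩ ⟨fun h => hzm ?_, hm⟩ <;>
  simp [h]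

theorem sum_abs_pairing_le (ha : AbsSumLE M a) {F : Finset J} {G : Finset ℕ}
    (hFG : (F : Set J).PairwiseDisjoint fun y => Function.support (g y) \ G) :
    ∑ y ∈ F, |pairing a (g y)| ≤ M + F.card * ∑ m ∈ G, |a m| := by
  classical
  have hpoint : ∀ m, ∑ y ∈ F, |(g y m : ℝ)| ≤ 1 + if m ∈ G then (F.card : ℝ) else 0 := by
    intro m
    split_ifs with hm
    · have := F.sum_le_card_nsmul _ 1 fun y _ => abs_coe_signType_le_one (g y m)
      rw [nsmul_one] at this
      linarith
    · simpa using sum_abs_coe_sign_le_one hFG hm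
  refine le_of_tendsto (tendsto_finsetSum F fun y _ => (ha.mul_sign (g y)).summable.hasSum.abs)
    (Eventually.of_forall fun T => ?_)
  calc ∑ y ∈ F, |∑ m ∈ T, a m * g y m|
      ≤ ∑ y ∈ F, ∑ m ∈ T, |a m| * |(g y m : ℝ)| := Finset.sum_le_sum fun y _ =>
        (T.abs_sum_le_sum_abs _).trans_eq (Finset.sum_congr rfl fun m _ => abs_mul _ _)
    _ = ∑ m ∈ T, |a m| * ∑ y ∈ F, |(g y m : ℝ)| := by
        rw [Finset.sum_comm]
        simp_rw [Finset.mul_sum]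
    _ ≤ ∑ m ∈ T, |a m| * (1 + if m ∈ G then (F.card : ℝ) else 0) := by
        gcongr with m
        exact hpoint m
    _ = ∑ m ∈ T, |a m| + ∑ m ∈ T ∩ G, F.card * |a m| := by
        simp_rw [mul_add, mul_one, mul_ite, mul_zero, Finset.sum_add_distrib, Finset.sum_ite_mem,
          mul_comm]
    _ ≤ M + F.card * ∑ m ∈ G, |a m| := by
        rw [Finset.mul_sum]
        gcongr
        · exact ha T
        · exact Finset.inter_subset_right

theorem eventually_sum_abs_pairing_le {l : Filter ι} {w : ι → ℕ → ℝ} (hw : ∀ i, AbsSumLE M (w i))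
    (hw₀ : ∀ m, Tendsto (fun i => w i m) l (𝓝 0))
    (hg : IsAlmostDisjoint fun y => Function.support (g y)) (F : Finset J) :
    ∀ᶠ i in l, ∑ y ∈ F, |pairing (w i) (g y)| ≤ M + 1 := by
  obtain ⟨G, hFG⟩ := hg.exists_pairwiseDisjoint_sdiff F
  have hG : Tendsto (fun i => (F.card : ℝ) * ∑ m ∈ G, |w i m|) l (𝓝 0) := by
    simpa using (tendsto_finsetSum G fun m _ => (hw₀ m).abs).const_mul (F.card : ℝ)
  filter_upwards [hG.eventually (gt_mem_nhds one_pos)] with i hi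
  exact (sum_abs_pairing_le (hw i) hFG).trans (add_le_add_right hi.le M)

theorem abs_pairing_sub_le (ha : AbsSumLE M a) {D : ℕ → ℕ} (hD : D.Injective)
    (hf : Function.support f ⊆ range D) {δ : ℝ} (hδ : 0 ≤ δ) {k : ℕ}
    (hoff : ∀ i, i ≠ k → |a (D i)| ≤ δ * (1 / 2) ^ i) :
    |pairing a f - a (D k) * f (D k)| ≤ δ * 2 := by
  have hpair : pairing a f = ∑' i, a (D i) * f (D i) :=
    (hD.tsum_eq (f := fun m => a m * f m) fun m hm => hf fun h => hm (by simp [h])).symm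
  have hsum : Summable fun i => a (D i) * f (D i) := (ha.mul_sign f).summable.comp_injective hD
  rw [hpair, hsum.tsum_eq_add_tsum_ite k, add_sub_cancel_left, ← Real.norm_eq_abs]
  refine tsum_of_norm_bounded (hasSum_geometric_two.mul_left δ) fun i => ?_
  split_ifs with hi
  · rw [norm_zero]
    positivity
  · rw [Real.norm_eq_abs, abs_mul]
    exact (mul_le_of_le_one_right (abs_nonneg _) (abs_coe_signType_le_one _)).trans (hoff i hi)

end Pairing

/-! ### Convergent subsequences -/

/-- `u` has a finite limit along the filter `l`. -/
def ConvergesAlong {ι : Type*} (l : Filter ι) (u : ι → ℝ) : Prop := ∃ v, Tendsto u l (𝓝 v)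

theorem ConvergesAlong.mono {ι : Type*} {l l' : Filter ι} {u : ι → ℝ} (h : ConvergesAlong l u)
    (hl : l' ≤ l) : ConvergesAlong l' u :=
  h.imp fun _ hv => hv.mono_left hl

theorem ConvergesAlong.comp_tendsto {ι κ : Type*} {l : Filter ι} {l' : Filter κ} {u : ι → ℝ}
    {s : κ → ι} (h : ConvergesAlong l u) (hs : Tendsto s l' l) : ConvergesAlong l' (u ∘ s) :=
  h.imp fun _ hv => hv.comp hs

theorem convergesAlong_ultrafilter_of_abs_le {ι : Type*} (U : Ultrafilter ι) {u : ι → ℝ} {C : ℝ}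
    (hu : ∀ i, |u i| ≤ C) : ConvergesAlong U u := by
  obtain ⟨v, -, hv⟩ := isCompact_Icc.ultrafilter_le_nhds (U.map u)
    (le_principal_iff.mpr (mem_map.mpr (Eventually.of_forall fun i => abs_le.mp (hu i))))
  exact ⟨v, hv⟩

section Subsequence

variable {ι J : Type*} {M C : ℝ}

theorem tendsto_zero_of_eventually_abs_le {l : Filter ι} {u : ι → ℝ}
    (h : ∀ k : ℕ, ∀ᶠ i in l, |u i| ≤ 1 / (k + 1)) : Tendsto u l (𝓝 0) := by
  rw [Metric.tendsto_nhds]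
  intro ε hε
  obtain ⟨k, hk⟩ := exists_nat_one_div_lt hε
  filter_upwards [h k] with i hi
  rw [dist_zero_right]
  exact hi.trans_lt hk

theorem card_mul_le_of_sum_abs_le {F : Finset J} {z : J → ℝ} {ε : ℝ} (hz : ∀ y ∈ F, ε ≤ |z y|)
    (hM : ∑ y ∈ F, |z y| ≤ M) : F.card * ε ≤ M := by
  rw [← nsmul_eq_mul]
  exact (F.card_nsmul_le_sum _ _ hz).trans hM

theorem exists_subseq_convergesAlong_of_countable [Countable J] {z : ℕ → J → ℝ}
    (hz : ∀ n y, |z n y| ≤ C) :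
    ∃ s : ℕ → ℕ, StrictMono s ∧ ∀ y, ConvergesAlong atTop fun i => z (s i) y := by
  have hcompact : IsCompact (univ.pi fun _ : J => Icc (-C) C) :=
    isCompact_univ_pi fun _ => isCompact_Icc
  obtain ⟨v, -, s, hs, hv⟩ := hcompact.tendsto_subseq (x := z) fun n y _ => abs_le.mp (hz n y)
  exact ⟨s, hs, fun y => ⟨v y, tendsto_pi_nhds.mp hv y⟩⟩

/-- Otherwise one could pick more than `M / ε` indices `y`, one after the other, keeping an infinite
set of `n` at which all the values `|z n y|` exceed `ε`. -/
theorem exists_infinite_subset_eventually_abs_le {z : ℕ → J → ℝ}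
    (hz : ∀ F : Finset J, ∀ᶠ n in atTop, ∑ y ∈ F, |z n y| ≤ M) {ε : ℝ} (hε : 0 < ε)
    {A : Set ℕ} (hA : A.Infinite) :
    ∃ A' ⊆ A, A'.Infinite ∧ ∃ F : Finset J, ∀ y ∉ F, ∀ᶠ n in atTop, n ∈ A' → |z n y| ≤ ε := by
  classical
  by_contra! hcon
  have hlarge : ∀ k : ℕ, ∃ A' ⊆ A, A'.Infinite ∧
      ∃ F : Finset J, F.card = k ∧ ∀ y ∈ F, ∀ n ∈ A', ε < |z n y| := by
    intro k
    induction k with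
    | zero => exact ⟨A, Subset.rfl, hA, ∅, by simp⟩
    | succ k ih =>
      obtain ⟨A', hA'A, hA', F, hF, hεF⟩ := ih
      obtain ⟨y, hy, hfreq⟩ := hcon A' hA'A hA' F
      refine ⟨{n | n ∈ A' ∧ ε < |z n y|}, fun n hn => hA'A hn.1,
        Nat.frequently_atTop_iff_infinite.mp hfreq, insert y F, by simp [hy, hF], ?_⟩
      intro y' hy' n hn
      rcases Finset.mem_insert.mp hy' with rfl | hy'F
      · exact hn.2
      · exact hεF y' hy'F n hn.1
  obtain ⟨k, hk⟩ := exists_nat_gt (M / ε)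
  obtain ⟨A', -, hA', F, rfl, hεF⟩ := hlarge k
  obtain ⟨n, hn, hnM⟩ :=
    ((Nat.frequently_atTop_iff_infinite.mpr hA').and_eventually (hz F)).exists
  exact absurd (card_mul_le_of_sum_abs_le (fun y hy => (hεF y hy n hn).le) hnM)
    (not_le.mpr ((div_lt_iff₀ hε).mp hk))

theorem exists_subseq_tendsto_zero_off_countable {z : ℕ → J → ℝ}
    (hz : ∀ F : Finset J, ∀ᶠ n in atTop, ∑ y ∈ F, |z n y| ≤ M) :
    ∃ s : ℕ → ℕ, StrictMono s ∧ ∃ Y : Set J, Y.Countable ∧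
      ∀ y ∉ Y, Tendsto (fun i => z (s i) y) atTop (𝓝 0) := by
  have hstep : ∀ (k : ℕ) (A : {A : Set ℕ // A.Infinite}), ∃ A' : {A : Set ℕ // A.Infinite},
      A'.1 ⊆ A.1 ∧ ∃ F : Finset J, ∀ y ∉ F, ∀ᶠ n in atTop, n ∈ A'.1 →
        |z n y| ≤ 1 / ((k : ℝ) + 1) := fun k A => by
    obtain ⟨A', hA'A, hA', hF⟩ :=
      exists_infinite_subset_eventually_abs_le hz (Nat.one_div_pos_of_nat (n := k)) A.2
    exact ⟨⟨A', hA'⟩, hA'A, hF⟩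
  choose next hnext F hF using hstep
  let A : ℕ → {A : Set ℕ // A.Infinite} := Nat.rec ⟨univ, infinite_univ⟩ next
  have hA : Antitone fun k => (A k).1 := antitone_nat_of_succ_le fun k => hnext k (A k)
  obtain ⟨s, hs, hsA⟩ := extraction_forall_of_frequently
    (P := fun k n => n ∈ (A k).1) fun k => Nat.frequently_atTop_iff_infinite.mpr (A k).2
  refine ⟨s, hs, ⋃ k, F k (A k), countable_iUnion fun k => (F k (A k)).countable_toSet,
    fun y hy => tendsto_zero_of_eventually_abs_le fun k => ?_⟩
  simp only [mem_iUnion, Finset.mem_coe, not_exists] at hy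
  filter_upwards [hs.tendsto_atTop.eventually (hF k (A k) y (hy k)),
    eventually_ge_atTop (k + 1)] with n hn hkn
  exact hn (hA hkn (hsA n))

theorem exists_subseq_convergesAlong {z : ℕ → J → ℝ}
    (hz : ∀ F : Finset J, ∀ᶠ n in atTop, ∑ y ∈ F, |z n y| ≤ M) (hC : ∀ n y, |z n y| ≤ C) :
    ∃ s : ℕ → ℕ, StrictMono s ∧ ∀ y, ConvergesAlong atTop fun i => z (s i) y := by
  obtain ⟨s, hs, Y, hY, hsY⟩ := exists_subseq_tendsto_zero_off_countable hz
  have := hY.to_subtype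
  obtain ⟨t, ht, htY⟩ := exists_subseq_convergesAlong_of_countable
    (z := fun n (y : Y) => z (s n) y) fun n y => hC _ _
  refine ⟨s ∘ t, hs.comp ht, fun y => ?_⟩
  by_cases hy : y ∈ Y
  · exact htY ⟨y, hy⟩
  · exact ⟨0, (hsY y hy).comp ht.tendsto_atTop⟩

theorem finite_setOf_not_eventually_abs_le (U : Ultrafilter ι) {z : ι → J → ℝ}
    (hz : ∀ F : Finset J, ∀ᶠ i in U, ∑ y ∈ F, |z i y| ≤ M) {ε : ℝ} (hε : 0 < ε) :
    {y | ¬ ∀ᶠ i in U, |z i y| ≤ ε}.Finite := by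
  by_contra hinf
  obtain ⟨k, hk⟩ := exists_nat_gt (M / ε)
  obtain ⟨F, hF, rfl⟩ := Set.Infinite.exists_subset_card_eq hinf k
  have hlarge : ∀ᶠ i in U, ∀ y ∈ F, ε < |z i y| :=
    (Filter.eventually_all_finset F).mpr fun y hy => by
      simpa only [not_le] using Ultrafilter.eventually_not.mpr (hF hy)
  obtain ⟨i, hi, hiM⟩ := (hlarge.and (hz F)).exists
  exact absurd (card_mul_le_of_sum_abs_le (fun y hy => (hi y hy).le) hiM)
    (not_le.mpr ((div_lt_iff₀ hε).mp hk))

theorem countable_setOf_not_tendsto_zero (U : Ultrafilter ι) {z : ι → J → ℝ}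
    (hz : ∀ F : Finset J, ∀ᶠ i in U, ∑ y ∈ F, |z i y| ≤ M) :
    {y | ¬ Tendsto (fun i => z i y) U (𝓝 0)}.Countable := by
  refine (countable_iUnion fun k : ℕ => (finite_setOf_not_eventually_abs_le U hz
    (Nat.one_div_pos_of_nat (n := k))).countable).mono fun y hy => ?_
  by_contra hcon
  simp only [mem_iUnion, mem_ofPred_eq, not_exists, not_not] at hcon
  exact hy (tendsto_zero_of_eventually_abs_le hcon)

end Subsequence

/-- The sequence is chosen greedily as a sequence of pairs `(n, k)`, where `k` fixes the precision
`δ * (1 / 2) ^ k` required in the column `n`. -/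
theorem exists_subseq_offDiagonal_le {r : ℕ → ℕ → ℝ} {ρ : ℕ → ℝ}
    (hrow : ∀ i, Tendsto (r i) atTop (𝓝 0)) (hcol : ∀ j, Tendsto (fun i => r i j) atTop (𝓝 (ρ j)))
    (hρ : Tendsto ρ atTop (𝓝 0)) {δ : ℝ} (hδ : 0 < δ) :
    ∃ t : ℕ → ℕ, StrictMono t ∧ ∀ i j, i ≠ j → r (t i) (t j) ≤ δ * (1 / 2) ^ j := by
  have hpos : ∀ k : ℕ, 0 < δ * (1 / 2) ^ k := fun k => by positivity
  have hextend : ∀ s : Finset (ℕ × ℕ), (∀ p ∈ s, ρ p.1 < δ * (1 / 2) ^ p.2) →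
      ∃ q : ℕ × ℕ, ρ q.1 < δ * (1 / 2) ^ q.2 ∧ ∀ p ∈ s, p.1 < q.1 ∧ p.2 < q.2 ∧
        r p.1 q.1 ≤ δ * (1 / 2) ^ q.2 ∧ r q.1 p.1 ≤ δ * (1 / 2) ^ p.2 := by
    intro s hs
    obtain ⟨k, hk⟩ := (s.image Prod.snd).exists_nat_subset_range
    have hlarge : ∀ᶠ n in atTop, ∀ p ∈ s, p.1 < n ∧ r p.1 n ≤ δ * (1 / 2) ^ k ∧
        r n p.1 ≤ δ * (1 / 2) ^ p.2 := by
      rw [Filter.eventually_all_finset]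
      intro p hp
      filter_upwards [eventually_gt_atTop p.1, (hrow p.1).eventually (gt_mem_nhds (hpos k)),
        (hcol p.1).eventually (gt_mem_nhds (hs p hp))] with n hn hrown hcoln
      exact ⟨hn, hrown.le, hcoln.le⟩
    obtain ⟨n, hn, hρn⟩ := (hlarge.and (hρ.eventually (gt_mem_nhds (hpos k)))).exists
    exact ⟨(n, k), hρn, fun p hp => ⟨(hn p hp).1,
      Finset.mem_range.mp (hk (Finset.mem_image_of_mem _ hp)), (hn p hp).2⟩⟩
  obtain ⟨f, -, hf⟩ := exists_seq_of_forall_finset_exists _ _ hextend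
  have hsnd : StrictMono fun n => (f n).2 := fun m n h => (hf m n h).2.1
  have hle : ∀ j, δ * (1 / 2 : ℝ) ^ (f j).2 ≤ δ * (1 / 2) ^ j := fun j =>
    mul_le_mul_of_nonneg_left
      (pow_le_pow_of_le_one (by norm_num) (by norm_num) (hsnd.id_le j)) hδ.le
  refine ⟨fun n => (f n).1, fun m n h => (hf m n h).1, fun i j hij => ?_⟩
  rcases lt_or_gt_of_ne hij with h | h
  · exact (hf i j h).2.2.1.trans (hle j)
  · exact (hf j i h).2.2.2.trans (hle j)

/-! ### Trisections -/

section Pairing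

variable {M : ℝ} {a b : ℕ → ℕ → ℝ}

theorem exists_subseq_pairing_convergesAlong (ha : ∀ n, AbsSumLE M (a n))
    (hb : ∀ n m, |b n m| ≤ M) {J : Type*} {f : J → ℕ → SignType}
    (hf : IsAlmostDisjoint fun y => Function.support (f y)) :
    ∃ s : ℕ → ℕ, StrictMono s ∧ (∀ m, ConvergesAlong atTop fun i => a (s i) m) ∧
      (∀ m, ConvergesAlong atTop fun i => b (s i) m) ∧
      ∀ y, ConvergesAlong atTop fun i => pairing (a (s i)) (f y) := by
  obtain ⟨s, hs, hsab⟩ := exists_subseq_convergesAlong_of_countable (J := ℕ ⊕ ℕ) (C := M)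
    (z := fun n => Sum.elim (a n) (b n))
    (by rintro n (m | m); exacts [(ha n).abs_apply_le m, hb n m])
  choose α hα using fun m => hsab (Sum.inl m)
  have hαM : AbsSumLE M α := .of_tendsto (fun i => ha (s i)) hα
  have hsub : ∀ i, AbsSumLE (M + M) fun m => a (s i) m - α m := fun i => (ha (s i)).sub hαM
  obtain ⟨t, ht, htf⟩ := exists_subseq_convergesAlong
    (eventually_sum_abs_pairing_le hsub (fun m => by simpa using (hα m).sub_const (α m)) hf)
    (fun i y => abs_pairing_le (hsub i) (f y))
  refine ⟨s ∘ t, hs.comp ht, fun m => (hsab (Sum.inl m)).comp_tendsto ht.tendsto_atTop,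
    fun m => (hsab (Sum.inr m)).comp_tendsto ht.tendsto_atTop, fun y => ?_⟩
  obtain ⟨v, hv⟩ := htf y
  refine ⟨v + pairing α (f y), (hv.add_const (pairing α (f y))).congr fun i => ?_⟩
  rw [pairing_sub_left (ha _) hαM, sub_add_cancel, Function.comp_apply]

theorem exists_subseq_abs_pairing_sub_le (ha : ∀ n, AbsSumLE M (a n)) {u : ℕ → ℕ}
    (hu : u.Injective) (hua : ∀ m, ConvergesAlong atTop fun i => a (u i) m) {δ : ℝ} (hδ : 0 < δ) :
    ∃ t : ℕ → ℕ, StrictMono t ∧ ∀ g : ℕ → SignType, Function.support g ⊆ range (u ∘ t) →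
      ∀ k, |pairing (a (u (t k))) g - a (u (t k)) (u (t k)) * g (u (t k))| ≤ δ := by
  choose α hα using hua
  have hαM : AbsSumLE M α := .of_tendsto (fun i => ha (u i)) hα
  have habs : ∀ {z : ℕ → ℝ}, AbsSumLE M z → Tendsto (fun j => |z (u j)|) atTop (𝓝 0) :=
    fun hz => by simpa using (hz.comp_injective hu).summable.tendsto_atTop_zero.abs
  obtain ⟨t, ht, hoff⟩ := exists_subseq_offDiagonal_le (r := fun i j => |a (u i) (u j)|)
    (fun i => habs (ha (u i))) (fun j => (hα (u j)).abs) (habs hαM) (half_pos hδ)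
  refine ⟨t, ht, fun g hg k => ?_⟩
  simpa using abs_pairing_sub_le (ha (u (t k))) (hu.comp ht.injective) hg (half_pos hδ).le
    fun i hik => hoff k i hik.symm

end Pairing

/-- The sign sequence of `θ` lives on codes of pairs consisting of an initial segment of `θ` and a
sign, the sign being its value there. -/
theorem exists_almostDisjoint_signs : ∃ ε : (ℕ → Bool) → ℕ → SignType,
    (IsAlmostDisjoint fun θ => Function.support (ε θ)) ∧ ∀ θ s, {i | ε θ i = s}.Infinite := by
  obtain ⟨code, hcode⟩ := exists_injective_nat (List Bool × SignType)
  let node (θ : ℕ → Bool) (p : ℕ × SignType) : ℕ := code (List.ofFn fun i : Fin p.1 => θ i, p.2)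
  have hnode : ∀ {θ θ' k l s s'}, node θ (k, s) = node θ' (l, s') →
      k = l ∧ s = s' ∧ ∀ i < k, θ i = θ' i := fun {θ θ' k l s s'} h => by
    obtain ⟨hlist, hs⟩ := Prod.ext_iff.mp (hcode h)
    obtain rfl : k = l := by simpa using congrArg List.length hlist
    exact ⟨rfl, hs, fun i hi => congrFun (List.ofFn_injective hlist) ⟨i, hi⟩⟩
  have hinj : ∀ θ, (node θ).Injective := fun θ p q h =>
    Prod.ext (hnode h).1 (hnode h).2.1
  refine ⟨fun θ => Function.extend (node θ) Prod.snd 0, ⟨fun θ θ' hne => ?_⟩, fun θ s => ?_⟩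
  · obtain ⟨m, hm⟩ := Function.ne_iff.mp hne
    refine (((finite_Iic m).prod finite_univ).image (node θ)).subset fun i hi => ?_
    have hmem : ∀ {θ}, i ∈ Function.support (Function.extend (node θ) Prod.snd 0) →
        i ∈ range (node θ) := fun {θ} h => by
      by_contra hcon
      exact h (Function.extend_apply' _ _ _ hcon)
    obtain ⟨⟨k, s⟩, rfl⟩ := hmem hi.1
    obtain ⟨⟨l, s'⟩, hl⟩ := hmem hi.2
    refine ⟨(k, s), ⟨?_, mem_univ _⟩, rfl⟩
    by_contra hk
    exact hm ((hnode hl.symm).2.2 m (not_le.mp hk))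
  · refine (infinite_range_of_injective (f := fun k => node θ (k, s)) fun k l h =>
      (hnode h).1).mono ?_
    rintro _ ⟨k, rfl⟩
    exact (hinj θ).extend_apply _ _ (k, s)

/-- A pair of matrices `a`, `b` is admissible if the rows of `a` are bounded in `ℓ₁`, the diagonal
of `a` is bounded away from zero, and the entries of `b` are bounded. -/
def IsAdmissible (a b : ℕ → ℕ → ℝ) : Prop :=
  ∃ M c : ℝ, 0 < c ∧ (∀ n, AbsSumLE M (a n)) ∧ (∀ n m, |b n m| ≤ M) ∧ ∀ n, c ≤ |a n n|

/-- A sign sequence together with three ultrafilters on `ℕ`, indexed by the three signs, along which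
the rows of a matrix will be told apart by the sign sequence and by no other test. -/
structure Trisection where
  sign : ℕ → SignType
  ultra : SignType → Ultrafilter ℕ

namespace Trisection

/-- The filter generated by the three ultrafilters: convergence along it means convergence along
each of them to the same limit. -/
def filter (s : Trisection) : Filter ℕ := ⨆ i, s.ultra i

theorem ultra_le_filter (s : Trisection) (i : SignType) : s.ultra i ≤ s.filter :=
  le_iSup (fun i => (s.ultra i : Filter ℕ)) i

instance (s : Trisection) : s.filter.NeBot :=
  (s.ultra 0).neBot.mono (s.ultra_le_filter 0)

/-- The pairings of the rows of `a` with the sign sequence have three different limits along the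
three ultrafilters, although the entries of `a` and `b` have the same limits. -/
structure IsAdapted (s : Trisection) (a b : ℕ → ℕ → ℝ) : Prop where
  infinite_support : (Function.support s.sign).Infinite
  exists_strictMono : ∃ v : SignType → ℝ, StrictMono v ∧
    ∀ i, Tendsto (fun n => pairing (a n) s.sign) (s.ultra i) (𝓝 (v i))
  convergesAlong_left : ∀ m, ConvergesAlong s.filter fun n => a n m
  convergesAlong_right : ∀ m, ConvergesAlong s.filter fun n => b n m

theorem countable_setOf_not_convergesAlong_pairing (s : Trisection) {M : ℝ} {a : ℕ → ℕ → ℝ}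
    (ha : ∀ n, AbsSumLE M (a n)) (hconv : ∀ m, ConvergesAlong s.filter fun n => a n m)
    {J : Type*} {g : J → ℕ → SignType} (hg : IsAlmostDisjoint fun y => Function.support (g y)) :
    {y | ¬ ConvergesAlong s.filter fun n => pairing (a n) (g y)}.Countable := by
  choose α hα using hconv
  have hαM : AbsSumLE M α := .of_tendsto ha hα
  have hcount : ∀ i, {y | ¬ Tendsto (fun n => pairing (fun m => a n m - α m) (g y))
      (s.ultra i) (𝓝 0)}.Countable := fun i =>
    countable_setOf_not_tendsto_zero (s.ultra i) <|
      eventually_sum_abs_pairing_le (fun n => (ha n).sub hαM)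
        (fun m => by simpa using ((hα m).mono_left (s.ultra_le_filter i)).sub_const (α m)) hg
  refine (countable_iUnion hcount).mono fun y hy => ?_
  by_contra hcon
  simp only [mem_iUnion, mem_ofPred_eq, not_exists, not_not] at hcon
  refine hy ⟨pairing α (g y), tendsto_iSup.mpr fun i => ?_⟩
  simpa [pairing_sub_left (ha _) hαM] using (hcon i).add_const (pairing α (g y))

end Trisection

theorem exists_strictMono_limits {ι : Type*} {U : SignType → Ultrafilter ι} {ε : ι → SignType}
    (hU : ∀ s, ∀ᶠ i in U s, ε i = s) {u d : ι → ℝ} {c : ℝ} (hc : 0 < c) (hd : ∀ i, c ≤ d i)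
    (hud : ∀ i, |u i - ε i * d i| ≤ c / 4) (hu : ∀ s, ConvergesAlong (U s) u) :
    ∃ v : SignType → ℝ, StrictMono v ∧ ∀ s, Tendsto u (U s) (𝓝 (v s)) := by
  choose v hv using hu
  have hneg : v (-1) ≤ -(3 / 4 * c) := le_of_tendsto (hv (-1)) <| by
    filter_upwards [hU (-1)] with i hi
    have := (abs_le.mp (hud i)).2
    rw [hi, SignType.coe_neg, SignType.coe_one] at this
    linarith [hd i]
  have hzero : |v 0| ≤ c / 4 := le_of_tendsto (hv 0).abs <| by
    filter_upwards [hU 0] with i hi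
    simpa [hi] using hud i
  have hpos : 3 / 4 * c ≤ v 1 := ge_of_tendsto (hv 1) <| by
    filter_upwards [hU 1] with i hi
    have := (abs_le.mp (hud i)).1
    rw [hi, SignType.coe_one] at this
    linarith [hd i]
  obtain ⟨hzero₁, hzero₂⟩ := abs_le.mp hzero
  refine ⟨v, fun s t hst => ?_, hv⟩
  have h₁ : v (-1) < v 0 := by linarith
  have h₂ : v 0 < v 1 := by linarith
  cases s <;> cases t <;> try exact absurd hst (by decide)
  exacts [h₂, h₁, h₁.trans h₂]

/-! ### Diagonalizing families -/

theorem exists_concentrating_sequence {a b : ℕ → ℕ → ℝ} {M : ℝ} (ha : ∀ n, AbsSumLE M (a n))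
    (hb : ∀ n m, |b n m| ≤ M) {A : Set ℕ} (hA : A.Infinite) {J : Type*} {f : J → ℕ → SignType}
    (hf : IsAlmostDisjoint fun y => Function.support (f y)) {δ : ℝ} (hδ : 0 < δ) :
    ∃ D : ℕ → ℕ, D.Injective ∧ range D ⊆ A ∧
      (∀ g : ℕ → SignType, Function.support g ⊆ range D →
        ∀ k, |pairing (a (D k)) g - a (D k) (D k) * g (D k)| ≤ δ) ∧
      (∀ m, ConvergesAlong (map D atTop) fun n => a n m) ∧
      (∀ m, ConvergesAlong (map D atTop) fun n => b n m) ∧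
      ∀ y, ConvergesAlong (map D atTop) fun n => pairing (a n) (f y) := by
  let e : ℕ ↪ A := hA.natEmbedding
  obtain ⟨s, hs, hsa, hsb, hsf⟩ := exists_subseq_pairing_convergesAlong
    (a := fun n => a (e n)) (b := fun n => b (e n)) (fun n => ha _) (fun n => hb _) hf
  have hu : (fun i => (e (s i) : ℕ)).Injective :=
    Subtype.val_injective.comp (e.injective.comp hs.injective)
  obtain ⟨t, ht, hdiff⟩ := exists_subseq_abs_pairing_sub_le ha hu hsa hδ
  have hconv : ∀ {u : ℕ → ℝ}, ConvergesAlong atTop (fun i => u (e (s i))) →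
      ConvergesAlong (map (fun i => (e (s (t i)) : ℕ)) atTop) u := fun ⟨v, hv⟩ =>
    ⟨v, tendsto_map'_iff.mpr (hv.comp ht.tendsto_atTop)⟩
  refine ⟨fun i => e (s (t i)), hu.comp ht.injective, ?_, hdiff, fun m => hconv (hsa m),
    fun m => hconv (hsb m), fun y => hconv (hsf y)⟩
  rintro _ ⟨i, rfl⟩
  exact (e (s (t i))).2

/-- The signs `ε` placed along the sequence `D`, relative to the signs of the diagonal entries of
`a`, so that its product with the diagonal of `a` has the signs `ε`. -/
noncomputable def signsAlong (D : ℕ → ℕ) (a : ℕ → ℕ → ℝ) (ε : ℕ → SignType) : ℕ → SignType :=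
  Function.extend D (fun i => ε i * SignType.sign (a (D i) (D i))) 0

section SignsAlong

variable {D : ℕ → ℕ} {a b : ℕ → ℕ → ℝ} {ε : ℕ → SignType}

theorem signsAlong_apply (hD : D.Injective) (i : ℕ) :
    signsAlong D a ε (D i) = ε i * SignType.sign (a (D i) (D i)) :=
  hD.extend_apply _ _ i

theorem mul_signsAlong_apply (hD : D.Injective) (i : ℕ) :
    a (D i) (D i) * signsAlong D a ε (D i) = ε i * |a (D i) (D i)| := by
  rw [signsAlong_apply hD, SignType.coe_mul, mul_left_comm, self_mul_sign]

theorem support_signsAlong_subset (hD : D.Injective) :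
    Function.support (signsAlong D a ε) ⊆ D '' Function.support ε := by
  intro m hm
  obtain ⟨i, rfl⟩ : m ∈ range D := by
    by_contra hcon
    exact hm (Function.extend_apply' _ _ _ hcon)
  rw [Function.mem_support, signsAlong_apply hD] at hm
  exact ⟨i, left_ne_zero_of_mul hm, rfl⟩

theorem infinite_support_signsAlong (hD : D.Injective) (ha : ∀ n, a n n ≠ 0)
    (hε : (Function.support ε).Infinite) : (Function.support (signsAlong D a ε)).Infinite := by
  refine (hε.image hD.injOn).mono ?_
  rintro _ ⟨i, hi, rfl⟩
  rw [Function.mem_support, signsAlong_apply hD]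
  exact mul_ne_zero hi (sign_ne_zero.mpr (ha _))

theorem exists_isAdapted_signsAlong {M c : ℝ} (hc : 0 < c) (ha : ∀ n, AbsSumLE M (a n))
    (hdiag : ∀ n, c ≤ |a n n|) (hD : D.Injective)
    (hdiff : ∀ g : ℕ → SignType, Function.support g ⊆ range D →
      ∀ k, |pairing (a (D k)) g - a (D k) (D k) * g (D k)| ≤ c / 4)
    (hDa : ∀ m, ConvergesAlong (map D atTop) fun n => a n m)
    (hDb : ∀ m, ConvergesAlong (map D atTop) fun n => b n m)
    (hε : ∀ s, {i | ε i = s}.Infinite) :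
    ∃ s : Trisection, s.sign = signsAlong D a ε ∧ s.filter ≤ map D atTop ∧ s.IsAdapted a b := by
  have hne : ∀ s, (atTop ⊓ 𝓟 {i | ε i = s}).NeBot := fun s =>
    frequently_mem_iff_neBot.mp (Nat.frequently_atTop_iff_infinite.mpr (hε s))
  let U (s : SignType) : Ultrafilter ℕ := Ultrafilter.of (atTop ⊓ 𝓟 {i | ε i = s})
  have hU : ∀ s, ∀ᶠ i in U s, ε i = s := fun s =>
    (Ultrafilter.of_le _).trans inf_le_right (mem_principal_self _)
  let s : Trisection := ⟨signsAlong D a ε, fun i => (U i).map D⟩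
  have hs : s.filter ≤ map D atTop := iSup_le fun i =>
    map_mono ((Ultrafilter.of_le _).trans inf_le_left)
  obtain ⟨v, hv, hlim⟩ := exists_strictMono_limits hU hc (fun i => hdiag (D i))
    (u := fun i => pairing (a (D i)) (signsAlong D a ε))
    (fun i => by
      rw [← mul_signsAlong_apply hD]
      exact hdiff _ ((support_signsAlong_subset hD).trans (image_subset_range _ _)) i)
    (fun s => convergesAlong_ultrafilter_of_abs_le _ fun i => abs_pairing_le (ha (D i)) _)
  refine ⟨s, rfl, hs, ⟨?_, ⟨v, hv, fun i => tendsto_map'_iff.mpr (hlim i)⟩,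
    fun m => (hDa m).mono hs, fun m => (hDb m).mono hs⟩⟩
  refine infinite_support_signsAlong hD (fun n => abs_pos.mp (hc.trans_le (hdiag n)))
    ((hε 1).mono fun i hi => ?_)
  rw [Function.mem_support, hi]
  exact one_ne_zero

end SignsAlong

theorem exists_trisections {a b : ℕ → ℕ → ℝ} (hab : IsAdmissible a b) {A : Set ℕ}
    (hA : A.Infinite) {J : Type*} {f : J → ℕ → SignType}
    (hf : IsAlmostDisjoint fun y => Function.support (f y)) :
    ∃ σ : (ℕ → Bool) → Trisection, (IsAlmostDisjoint fun θ => Function.support (σ θ).sign) ∧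
      ∀ θ, ((σ θ).IsAdapted a b ∧ Function.support (σ θ).sign ⊆ A) ∧
        ∀ y, ConvergesAlong (σ θ).filter fun n => pairing (a n) (f y) := by
  obtain ⟨M, c, hc, ha, hb, hdiag⟩ := hab
  obtain ⟨D, hD, hDA, hdiff, hDa, hDb, hDf⟩ :=
    exists_concentrating_sequence ha hb hA hf (δ := c / 4) (by positivity)
  obtain ⟨ε, hε, hεinf⟩ := exists_almostDisjoint_signs
  choose σ hsign hσ hadapted using fun θ =>
    exists_isAdapted_signsAlong hc ha hdiag hD hdiff hDa hDb (hεinf θ)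
  have hsupp : ∀ θ, Function.support (σ θ).sign ⊆ D '' Function.support (ε θ) := fun θ => by
    rw [hsign]
    exact support_signsAlong_subset hD
  refine ⟨σ, ⟨fun θ θ' hθ => ?_⟩, fun θ => ⟨⟨hadapted θ, ?_⟩, fun y => (hDf y).mono (hσ θ)⟩⟩
  · refine ((hε.finite_inter hθ).image D).subset ?_
    rw [image_inter hD]
    exact inter_subset_inter (hsupp θ) (hsupp θ')
  · exact (hsupp θ).trans ((image_subset_range _ _).trans hDA)

theorem exists_family_of_step {I β : Type*} [LinearOrder I] [WellFoundedLT I] [Nonempty β]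
    (P : I → β → Prop) (R : I → I → β → β → Prop)
    (hstep : ∀ x (g : I → β), (∀ y < x, P y (g y)) → ∃ s, P x s ∧ ∀ y < x, R y x (g y) s) :
    ∃ g : I → β, (∀ x, P x (g x)) ∧ ∀ x, ∀ y < x, R y x (g y) (g x) := by
  classical
  let choice (x : I) (prev : ∀ y, y < x → β) : β :=
    Classical.epsilon fun s => P x s ∧ ∀ y (hy : y < x), R y x (prev y hy) s
  let g : I → β := (wellFounded_lt (α := I)).fix choice
  have hg : ∀ x, g x = Classical.epsilon fun s => P x s ∧ ∀ y < x, R y x (g y) s :=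
    (wellFounded_lt (α := I)).fix_eq choice
  have hspec : ∀ x, P x (g x) ∧ ∀ y < x, R y x (g y) (g x) := by
    intro x
    induction x using (wellFounded_lt (α := I)).induction with
    | _ x ih =>
      rw [hg]
      exact Classical.epsilon_spec (hstep x g fun y hy => (ih y hy).1)
  exact ⟨g, fun x => (hspec x).1, fun x => (hspec x).2⟩

theorem exists_forall_notMem_of_countable {ι α : Type u} (hα : Cardinal.aleph0 < Cardinal.mk α)
    (hι : Cardinal.mk ι < Cardinal.mk α) {E : ι → Set α} (hE : ∀ i, (E i).Countable) :
    ∃ x, ∀ i, x ∉ E i := by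
  by_contra! hcover
  have hle : Cardinal.mk α ≤ Cardinal.mk ι * Cardinal.aleph0 :=
    calc Cardinal.mk α = Cardinal.mk (⋃ i, E i) := by
          rw [← Cardinal.mk_univ, eq_univ_of_forall fun x => mem_iUnion.mpr (hcover x)]
      _ ≤ Cardinal.sum fun i => Cardinal.mk (E i) := Cardinal.mk_iUnion_le_sum_mk
      _ ≤ Cardinal.sum fun _ : ι => Cardinal.aleph0 :=
          Cardinal.sum_le_sum _ _ fun i => Cardinal.le_aleph0_iff_set_countable.mpr (hE i)
      _ = Cardinal.mk ι * Cardinal.aleph0 := by simp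
  exact hle.not_gt (Cardinal.mul_lt_of_lt hα.le hι hα)

theorem Trisection.exists_isAdapted_mutually_convergesAlong {a b : ℕ → ℕ → ℝ}
    (hab : IsAdmissible a b) {A : Set ℕ} (hA : A.Infinite) {J : Type}
    (hJ : Cardinal.mk J < Cardinal.continuum) {g : J → Trisection} {p q : J → ℕ → ℕ → ℝ}
    (hpq : ∀ y, IsAdmissible (p y) (q y)) (hg : ∀ y, (g y).IsAdapted (p y) (q y))
    (hdisj : IsAlmostDisjoint fun y => Function.support (g y).sign) :
    ∃ s : Trisection, (s.IsAdapted a b ∧ Function.support s.sign ⊆ A) ∧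
      ∀ y, (ConvergesAlong s.filter fun n => pairing (a n) (g y).sign) ∧
        ConvergesAlong (g y).filter fun n => pairing (p y n) s.sign := by
  obtain ⟨σ, hσdisj, hσ⟩ := exists_trisections hab hA hdisj
  have hcount : ∀ y, {θ | ¬ ConvergesAlong (g y).filter fun n =>
      pairing (p y n) (σ θ).sign}.Countable := fun y => by
    obtain ⟨M, c, -, hp, -⟩ := hpq y
    exact (g y).countable_setOf_not_convergesAlong_pairing hp (hg y).convergesAlong_left hσdisj
  have hcard : Cardinal.mk (ℕ → Bool) = Cardinal.continuum := by simp
  obtain ⟨θ, hθ⟩ := exists_forall_notMem_of_countable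
    (hcard ▸ Cardinal.aleph0_lt_continuum) (hcard ▸ hJ) hcount
  exact ⟨σ θ, (hσ θ).1, fun y => ⟨(hσ θ).2 y, not_not.mp (hθ y)⟩⟩

theorem Trisection.exists_family_isAdapted {I : Type} (hI : Cardinal.mk I ≤ Cardinal.continuum)
    {a b : I → ℕ → ℕ → ℝ} (hab : ∀ x, IsAdmissible (a x) (b x)) :
    ∃ g : I → Trisection, (IsAlmostDisjoint fun x => Function.support (g x).sign) ∧
      (∀ x, (g x).IsAdapted (a x) (b x)) ∧
      ∀ x, ∀ y ≠ x, ConvergesAlong (g x).filter fun n => pairing (a x n) (g y).sign := by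
  obtain ⟨_, _, hord⟩ := Cardinal.exists_ord_eq_type_lt I
  obtain ⟨κ⟩ : Nonempty (I ↪ (ℕ → Bool)) := (Cardinal.le_def _ _).mp (by simpa using hI)
  obtain ⟨ε, hε, hεinf⟩ := exists_almostDisjoint_signs
  let A (x : I) : Set ℕ := Function.support (ε (κ x))
  have hA : ∀ x, (A x).Infinite := fun x => (hεinf (κ x) 1).mono fun i hi => by
    simp only [A, Function.mem_support, show ε (κ x) i = 1 from hi, ne_eq, one_ne_zero,
      not_false_eq_true]
  have : Nonempty Trisection := ⟨⟨0, fun _ => hyperfilter ℕ⟩⟩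
  obtain ⟨g, hg, hconv⟩ := exists_family_of_step
    (P := fun (x : I) (s : Trisection) => s.IsAdapted (a x) (b x) ∧ Function.support s.sign ⊆ A x)
    (R := fun y x s s' => (ConvergesAlong s'.filter fun n => pairing (a x n) s.sign) ∧
      ConvergesAlong s.filter fun n => pairing (a y n) s'.sign) (fun x g hg => by
    obtain ⟨s, hs, hconv⟩ := exists_isAdapted_mutually_convergesAlong (hab x) (hA x)
      ((Cardinal.mk_Iio_lt x hord).trans_le hI) (g := fun y : Iio x => g y) (fun y => hab y)
      (fun y => (hg y y.2).1) ⟨fun y z hyz =>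
        (hε.finite_inter (κ.injective.ne (Subtype.val_injective.ne hyz))).subset
          (inter_subset_inter (hg y y.2).2 (hg z z.2).2)⟩
    exact ⟨s, hs, fun y hy => hconv ⟨y, hy⟩⟩)
  refine ⟨g, ⟨fun x y hxy => ?_⟩, fun x => (hg x).1, fun x y hy => ?_⟩
  · exact (hε.finite_inter (κ.injective.ne hxy)).subset (inter_subset_inter (hg x).2 (hg y).2)
  · rcases hy.lt_or_gt with h | h
    · exact (hconv _ y h).1
    · exact (hconv y _ h).2

/-- A family of sign sequences is diagonalizing if every admissible pair of matrices is adapted to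
a trisection whose sign sequence is a member of the family, all the other members being unable to
tell the rows of the first matrix apart along the trisection. -/
def IsDiagonalizing {I : Type*} (f : I → ℕ → SignType) : Prop :=
  ∀ a b, IsAdmissible a b → ∃ (x : I) (s : Trisection), s.sign = f x ∧ s.IsAdapted a b ∧
    ∀ y ≠ x, ConvergesAlong s.filter fun n => pairing (a n) (f y)

theorem exists_diagonalizing_family : ∃ (I : Type) (f : I → ℕ → SignType),
    (IsAlmostDisjoint fun x => Function.support (f x)) ∧
      (∀ x, (Function.support (f x)).Infinite) ∧ IsDiagonalizing f := by
  let I := {d : (ℕ → ℕ → ℝ) × (ℕ → ℕ → ℝ) // IsAdmissible d.1 d.2}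
  have hI : Cardinal.mk I ≤ Cardinal.continuum :=
    (Cardinal.mk_subtype_le _).trans (by simp [Cardinal.mk_real])
  obtain ⟨g, hdisj, hg, hconv⟩ := Trisection.exists_family_isAdapted hI fun x => x.2
  exact ⟨I, fun x => (g x).sign, hdisj, fun x => (hg x).infinite_support, fun a b hab =>
    ⟨⟨(a, b), hab⟩, _, rfl, hg ⟨(a, b), hab⟩, hconv ⟨(a, b), hab⟩⟩⟩

/-! ### Mrówka spaces -/

theorem IsScatteredSpace.onePoint {X : Type*} [TopologicalSpace X] (hX : IsScatteredSpace X) :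
    IsScatteredSpace (OnePoint X) := by
  intro S hS
  rcases ((↑) ⁻¹' S : Set X).eq_empty_or_nonempty with hempty | hne
  · have hsub : S ⊆ {OnePoint.infty} := fun z hz => by
      cases z with
      | infty => rfl
      | coe z => exact absurd (show z ∈ ((↑) ⁻¹' S : Set X) from hz) (hempty ▸ notMem_empty z)
    obtain rfl := hS.subset_singleton_iff.mp hsub
    exact ⟨_, rfl, univ, isOpen_univ, univ_inter _⟩
  · obtain ⟨z, hz, U, hU, hUS⟩ := hX _ hne
    refine ⟨z, hz, (↑) '' U, OnePoint.isOpen_image_coe.mpr hU, ?_⟩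
    rw [← image_inter_preimage, hUS, image_singleton]

theorem separableSpace_onePoint (X : Type*) [TopologicalSpace X]
    [TopologicalSpace.SeparableSpace X] : TopologicalSpace.SeparableSpace (OnePoint X) := by
  obtain ⟨D, hD, hdense⟩ := TopologicalSpace.exists_countable_dense X
  refine ⟨insert OnePoint.infty ((↑) '' D), (hD.image _).insert _, fun z => ?_⟩
  cases z with
  | infty => exact subset_closure (mem_insert _ _)
  | coe z =>
    exact closure_mono (subset_insert _ _) (image_closure_subset_closure_image
      OnePoint.continuous_coe (mem_image_of_mem _ (hdense z)))

section IndicatorFun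

variable {X : Type*} [TopologicalSpace X] [T2Space X]

/-- The indicator function of a compact open set, as a continuous function on the one-point
compactification. -/
noncomputable def indicatorFun (U : TopologicalSpace.CompactOpens X) : C(OnePoint X, ℝ) where
  toFun := indicator ((↑) '' (U : Set X)) 1
  continuous_toFun := by
    have h : IsClopen ((↑) '' (U : Set X) : Set (OnePoint X)) :=
      ⟨OnePoint.isClosed_image_coe.mpr ⟨U.isCompact.isClosed, U.isCompact⟩,
        OnePoint.isOpen_image_coe.mpr U.isOpen⟩
    exact continuous_const.indicator (by simp [h.frontier_eq])

@[simp] theorem indicatorFun_coe (U : TopologicalSpace.CompactOpens X) (z : X) :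
    indicatorFun U z = indicator (U : Set X) 1 z :=
  indicator_image OnePoint.coe_injective

@[simp] theorem indicatorFun_infty (U : TopologicalSpace.CompactOpens X) :
    indicatorFun U OnePoint.infty = 0 :=
  indicator_of_notMem OnePoint.infty_notMem_image_coe _

theorem indicatorFun_mul_self (U : TopologicalSpace.CompactOpens X) :
    indicatorFun U * indicatorFun U = indicatorFun U := by
  ext z
  cases z with
  | infty => simp
  | coe z => by_cases hz : z ∈ U <;> simp [hz]

end IndicatorFun

/-- The Mrówka space of a family `B` of subsets of `N`: the points of `N` are isolated, and for
each index `x` there is a point to which `B x` converges. -/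
def PsiSpace {N I : Type*} (_ : I → Set N) : Type _ := N ⊕ I

namespace PsiSpace

variable {N I : Type*} {B : I → Set N}

instance : TopologicalSpace (PsiSpace B) where
  IsOpen U := ∀ x : I, (Sum.inr x : N ⊕ I) ∈ U → (B x \ {a | (Sum.inl a : N ⊕ I) ∈ U}).Finite
  isOpen_univ _ _ := finite_empty.subset fun _ ha => ha.2 trivial
  isOpen_inter _ _ hU hV x hx := ((hU x hx.1).union (hV x hx.2)).subset sdiff_inter.subset
  isOpen_sUnion _ hS x := fun ⟨U, hU, hxU⟩ =>
    (hS U hU x hxU).subset fun _ ha => ⟨ha.1, fun h => ha.2 ⟨U, hU, h⟩⟩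

variable (B) in
/-- The isolated point attached to an element of `N`. -/
def pt (a : N) : PsiSpace B := Sum.inl a

variable (B) in
/-- The limit point of the set `B x`. -/
def lim (x : I) : PsiSpace B := Sum.inr x

theorem pt_injective : Function.Injective (pt B) := Sum.inl_injective

@[simp] theorem pt_inj {a b : N} : pt B a = pt B b ↔ a = b := pt_injective.eq_iff

@[simp] theorem lim_inj {x y : I} : lim B x = lim B y ↔ x = y := Sum.inr_injective.eq_iff

@[simp] theorem pt_ne_lim (a : N) (x : I) : pt B a ≠ lim B x := Sum.inl_ne_inr

@[simp] theorem lim_ne_pt (a : N) (x : I) : lim B x ≠ pt B a := Sum.inr_ne_inl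

@[elab_as_elim, induction_eliminator]
theorem rec {P : PsiSpace B → Prop} (pt : ∀ a, P (pt B a)) (lim : ∀ x, P (lim B x)) (z) : P z :=
  Sum.rec pt lim z

theorem isOpen_iff {U : Set (PsiSpace B)} :
    IsOpen U ↔ ∀ x, lim B x ∈ U → (B x \ pt B ⁻¹' U).Finite := Iff.rfl

theorem isOpen_image_pt (A : Set N) : IsOpen (pt B '' A) := by
  rw [isOpen_iff]
  rintro x ⟨a, -, h⟩
  exact absurd h (pt_ne_lim a x)

theorem isClosed_iff {C : Set (PsiSpace B)} :
    IsClosed C ↔ ∀ x, lim B x ∉ C → (B x ∩ pt B ⁻¹' C).Finite := by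
  rw [← isOpen_compl_iff, isOpen_iff]
  simp [sdiff_eq]

theorem isClopen_singleton_pt (a : N) : IsClopen {pt B a} :=
  ⟨isClosed_iff.mpr fun x _ => (finite_singleton a).subset fun b hb => pt_injective hb.2,
    by simpa using isOpen_image_pt (B := B) {a}⟩

theorem tendsto_pt_lim (x : I) : Tendsto (fun a : B x => pt B a) cofinite (𝓝 (lim B x)) := by
  refine tendsto_nhds.mpr fun U hU hx => mem_cofinite.mpr ?_
  exact ((hU x hx).preimage Subtype.coe_injective.injOn).subset fun a ha => ⟨a.2, ha⟩

variable (B) in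
/-- The compact open set formed by an isolated point. -/
def ptNhd (a : N) : TopologicalSpace.CompactOpens (PsiSpace B) where
  carrier := {pt B a}
  isCompact' := isCompact_singleton
  isOpen' := (isClopen_singleton_pt a).isOpen

variable (B) in
/-- The compact open set formed by `B x` and its limit point. -/
def limNhd (x : I) : TopologicalSpace.CompactOpens (PsiSpace B) where
  carrier := insert (lim B x) (pt B '' B x)
  isCompact' := by
    rw [image_eq_range]
    exact (tendsto_pt_lim x).isCompact_insert_range_of_cofinite
  isOpen' := isOpen_iff.mpr fun y hy => by
    obtain rfl : y = x := by simpa using hy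
    simp [sdiff_eq_empty.mpr (subset_preimage_image _ _ |>.trans
      (preimage_mono (subset_insert _ _)))]

@[simp] theorem pt_mem_ptNhd {a b : N} : pt B b ∈ ptNhd B a ↔ b = a := pt_inj

@[simp] theorem lim_notMem_ptNhd (a : N) (x : I) : lim B x ∉ ptNhd B a := lim_ne_pt a x

@[simp] theorem pt_mem_limNhd {a : N} {x : I} : pt B a ∈ limNhd B x ↔ a ∈ B x := by
  simp [limNhd, ← SetLike.mem_coe]

@[simp] theorem lim_mem_limNhd {x y : I} : lim B y ∈ limNhd B x ↔ y = x := by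
  simp [limNhd, ← SetLike.mem_coe]

theorem isClosed_limNhd [IsAlmostDisjoint B] (x : I) : IsClosed (limNhd B x : Set (PsiSpace B)) :=
  isClosed_iff.mpr fun y hy => by
    have hyx : y ≠ x := fun h => hy (lim_mem_limNhd.mpr h)
    refine (IsAlmostDisjoint.finite_inter hyx).subset (inter_subset_inter_right _ fun a ha => ?_)
    exact pt_mem_limNhd.mp ha

instance [IsAlmostDisjoint B] : T2Space (PsiSpace B) := by
  have : TotallySeparatedSpace (PsiSpace B) := by
    refine totallySeparatedSpace_iff_exists_isClopen.mpr fun z w hzw => ?_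
    induction z with
    | pt a => exact ⟨_, isClopen_singleton_pt a, rfl, hzw.symm⟩
    | lim x =>
      induction w with
      | pt a => exact ⟨_, (isClopen_singleton_pt a).compl, by simp, by simp⟩
      | lim y =>
        refine ⟨_, ⟨isClosed_limNhd x, (limNhd B x).isOpen⟩, lim_mem_limNhd.mpr rfl, fun h => ?_⟩
        exact hzw (by rw [lim_mem_limNhd.mp h])
  infer_instance

instance : WeaklyLocallyCompactSpace (PsiSpace B) where
  exists_compact_mem_nhds z := by
    induction z with
    | pt a => exact ⟨_, (ptNhd B a).isCompact, (ptNhd B a).isOpen.mem_nhds (by simp)⟩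
    | lim x => exact ⟨_, (limNhd B x).isCompact, (limNhd B x).isOpen.mem_nhds (by simp)⟩

theorem isScatteredSpace : IsScatteredSpace (PsiSpace B) := by
  rintro S ⟨z, hz⟩
  by_cases hpt : ∃ a, pt B a ∈ S
  · obtain ⟨a, ha⟩ := hpt
    exact ⟨_, ha, _, (isClopen_singleton_pt a).isOpen, by simpa using ha⟩
  · push Not at hpt
    induction z with
    | pt a => exact absurd hz (hpt a)
    | lim x =>
      refine ⟨_, hz, limNhd B x, (limNhd B x).isOpen, Subset.antisymm ?_ ?_⟩
      · rintro w ⟨hw, hwS⟩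
        induction w with
        | pt a => exact absurd hwS (hpt a)
        | lim y => rw [lim_mem_limNhd.mp hw, mem_singleton_iff]
      · exact singleton_subset_iff.mpr ⟨lim_mem_limNhd.mpr rfl, hz⟩

theorem denseRange_pt (hB : ∀ x, (B x).Infinite) : DenseRange (pt B) := fun z => by
  induction z with
  | pt a => exact subset_closure (mem_range_self a)
  | lim x =>
    have := (hB x).to_subtype
    exact mem_closure_of_tendsto (tendsto_pt_lim x) (Eventually.of_forall fun a => ⟨a, rfl⟩)

theorem separableSpace [Countable N] (hB : ∀ x, (B x).Infinite) :
    TopologicalSpace.SeparableSpace (PsiSpace B) :=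
  ⟨range (pt B), countable_range _, denseRange_pt hB⟩

@[elab_as_elim]
theorem onePoint_rec {P : OnePoint (PsiSpace B) → Prop} (infty : P OnePoint.infty)
    (pt : ∀ a, P (pt B a)) (lim : ∀ x, P (lim B x)) (z) : P z :=
  z.rec infty fun w => w.rec pt lim

theorem ext_onePoint {g h : C(OnePoint (PsiSpace B), ℝ)}
    (hinfty : g OnePoint.infty = h OnePoint.infty) (hpt : ∀ a, g (pt B a) = h (pt B a))
    (hlim : ∀ x, g (lim B x) = h (lim B x)) : g = h := by
  ext z
  induction z using onePoint_rec with
  | infty => exact hinfty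
  | pt a => exact hpt a
  | lim x => exact hlim x

variable [IsAlmostDisjoint B]

variable (B) in
/-- The indicator function of an isolated point. -/
noncomputable def ptFun (a : N) : C(OnePoint (PsiSpace B), ℝ) := indicatorFun (ptNhd B a)

variable (B) in
/-- The indicator function of `B x` together with its limit point. -/
noncomputable def limFun (x : I) : C(OnePoint (PsiSpace B), ℝ) := indicatorFun (limNhd B x)

@[simp] theorem ptFun_infty (a : N) : ptFun B a OnePoint.infty = 0 := indicatorFun_infty _

@[simp] theorem limFun_infty (x : I) : limFun B x OnePoint.infty = 0 := indicatorFun_infty _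

@[simp] theorem ptFun_lim (a : N) (x : I) : ptFun B a (lim B x) = 0 := by simp [ptFun]

open Classical in
@[simp] theorem ptFun_pt (a b : N) : ptFun B a (pt B b) = if b = a then 1 else 0 := by
  simp [ptFun, indicator_apply]

open Classical in
@[simp] theorem limFun_lim (x y : I) : limFun B x (lim B y) = if y = x then 1 else 0 := by
  simp [limFun, indicator_apply]

open Classical in
@[simp] theorem limFun_pt (x : I) (a : N) : limFun B x (pt B a) = if a ∈ B x then 1 else 0 := by
  simp [limFun, indicator_apply]

theorem mul_ptFun (g : C(OnePoint (PsiSpace B), ℝ)) (a : N) :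
    g * ptFun B a = g (pt B a) • ptFun B a := by
  classical
  refine ext_onePoint (by simp) (fun b => ?_) (by simp)
  by_cases h : b = a <;> simp [h]

theorem limFun_mul_limFun {x y : I} (hxy : x ≠ y) :
    limFun B x * limFun B y =
      ∑ a ∈ (IsAlmostDisjoint.finite_inter (B := B) hxy).toFinset, ptFun B a := by
  classical
  refine ext_onePoint (by simp) (fun a => ?_) (fun z => ?_)
  · simp [← ite_and, and_comm]
  · by_cases h : z = x <;> simp [h, hxy]

variable (B) in
/-- The constant function one, and the indicator functions of the basic compact open sets. -/
def basicFuns : Set C(OnePoint (PsiSpace B), ℝ) := insert 1 (range (ptFun B) ∪ range (limFun B))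

theorem span_basicFuns_mul_self_le :
    Submodule.span ℝ (basicFuns B) * Submodule.span ℝ (basicFuns B) ≤
      Submodule.span ℝ (basicFuns B) := by
  have hpt : ∀ a, ptFun B a ∈ Submodule.span ℝ (basicFuns B) := fun a =>
    Submodule.subset_span (Or.inr (Or.inl ⟨a, rfl⟩))
  rw [Submodule.span_mul_span, Submodule.span_le]
  rintro _ ⟨g, hg, h, rfl | ⟨a, rfl⟩ | ⟨y, rfl⟩, rfl⟩ <;> dsimp only
  · rw [mul_one]
    exact Submodule.subset_span hg
  · rw [mul_ptFun]
    exact Submodule.smul_mem _ _ (hpt a)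
  · rcases hg with rfl | ⟨a, rfl⟩ | ⟨x, rfl⟩
    · rw [one_mul]
      exact Submodule.subset_span (Or.inr (Or.inr ⟨y, rfl⟩))
    · rw [mul_comm, mul_ptFun]
      exact Submodule.smul_mem _ _ (hpt a)
    · rcases eq_or_ne x y with rfl | hxy
      · rw [limFun, indicatorFun_mul_self]
        exact Submodule.subset_span (Or.inr (Or.inr ⟨x, rfl⟩))
      · rw [limFun_mul_limFun hxy]
        exact Submodule.sum_mem _ fun a _ => hpt a

theorem exists_mem_basicFuns_ne {z w : OnePoint (PsiSpace B)} (hzw : z ≠ w) :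
    ∃ g ∈ basicFuns B, g z ≠ g w := by
  classical
  have hpt : ∀ a, ptFun B a ∈ basicFuns B := fun a => Or.inr (Or.inl ⟨a, rfl⟩)
  have hlim : ∀ x, limFun B x ∈ basicFuns B := fun x => Or.inr (Or.inr ⟨x, rfl⟩)
  induction z using onePoint_rec with
  | pt a =>
    refine ⟨_, hpt a, ?_⟩
    induction w using onePoint_rec with
    | pt b => simpa using hzw.symm
    | _ => simp
  | infty =>
    induction w using onePoint_rec with
    | infty => exact absurd rfl hzw
    | pt b => exact ⟨_, hpt b, by simp⟩
    | lim y => exact ⟨_, hlim y, by simp⟩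
  | lim x =>
    induction w using onePoint_rec with
    | infty => exact ⟨_, hlim x, by simp⟩
    | pt b => exact ⟨_, hpt b, by simp⟩
    | lim y => exact ⟨_, hlim x, by simpa using hzw.symm⟩

-- The products of basic functions are finite sums of basic functions, so they span an algebra.
theorem dense_span_basicFuns :
    Dense (Submodule.span ℝ (basicFuns B) : Set C(OnePoint (PsiSpace B), ℝ)) := by
  let A : Subalgebra ℝ C(OnePoint (PsiSpace B), ℝ) :=
    (Submodule.span ℝ (basicFuns B)).toSubalgebra (Submodule.subset_span (mem_insert _ _))
      fun g h hg hh => span_basicFuns_mul_self_le (Submodule.mul_mem_mul hg hh)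
  have hA : A.SeparatesPoints := fun z w hzw => by
    obtain ⟨g, hg, hne⟩ := exists_mem_basicFuns_ne hzw
    exact ⟨g, ⟨g, Submodule.subset_span hg, rfl⟩, hne⟩
  exact dense_iff_closure_eq.mpr (congr_arg SetLike.coe
    (ContinuousMap.subalgebra_topologicalClosure_eq_top_of_separatesPoints A hA))

end PsiSpace

/-! ### Functionals on continuous functions on Mrówka spaces -/

theorem exists_lt_abs_apply {K : Type*} [TopologicalSpace K] [CompactSpace K] {g : C(K, ℝ)} {c : ℝ}
    (hc : 0 ≤ c) (hg : c < ‖g‖) : ∃ z, c < |g z| := by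
  by_contra! hle
  exact hg.not_ge ((ContinuousMap.norm_le g hc).mpr hle)

theorem sum_abs_apply_le_opNorm {K ι : Type*} [TopologicalSpace K] [CompactSpace K]
    (μ : C(K, ℝ) →L[ℝ] ℝ) {F : Finset ι} {e : ι → C(K, ℝ)} (he : ∀ z, ∑ i ∈ F, |e i z| ≤ 1) :
    ∑ i ∈ F, |μ (e i)| ≤ ‖μ‖ := by
  have hnorm : ‖∑ i ∈ F, (SignType.sign (μ (e i)) : ℝ) • e i‖ ≤ 1 := by
    refine (ContinuousMap.norm_le _ zero_le_one).mpr fun z => ?_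
    rw [ContinuousMap.sum_apply, Real.norm_eq_abs]
    refine (Finset.abs_sum_le_sum_abs _ _).trans ((Finset.sum_le_sum fun i _ => ?_).trans (he z))
    rw [ContinuousMap.smul_apply, smul_eq_mul, abs_mul]
    exact mul_le_of_le_one_left (abs_nonneg _) (abs_coe_signType_le_one _)
  calc ∑ i ∈ F, |μ (e i)| = μ (∑ i ∈ F, (SignType.sign (μ (e i)) : ℝ) • e i) := by
        simp only [map_sum, map_smul, smul_eq_mul, sign_mul_self]
    _ ≤ ‖μ‖ := (le_abs_self _).trans (μ.unit_le_opNorm _ hnorm)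

namespace PsiSpace

section Functional

variable {N I : Type*} {B : I → Set N} [IsAlmostDisjoint B]
  {μ : C(OnePoint (PsiSpace B), ℝ) →L[ℝ] ℝ}

theorem functional_ext {ν : C(OnePoint (PsiSpace B), ℝ) →L[ℝ] ℝ} (hone : μ 1 = ν 1)
    (hpt : ∀ a, μ (ptFun B a) = ν (ptFun B a)) (hlim : ∀ x, μ (limFun B x) = ν (limFun B x)) :
    μ = ν := by
  refine ContinuousLinearMap.ext_on dense_span_basicFuns ?_
  rintro _ (rfl | ⟨a, rfl⟩ | ⟨x, rfl⟩)
  exacts [hone, hpt a, hlim x]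

theorem apply_eq_of_apply_limFun_eq_zero (hone : μ 1 = 0) (hpt : ∀ a, μ (ptFun B a) = 0) {x : I}
    (hlim : ∀ y ≠ x, μ (limFun B y) = 0) (g : C(OnePoint (PsiSpace B), ℝ)) :
    μ g = (g (lim B x) - g OnePoint.infty) * μ (limFun B x) := by
  have hμ : μ = μ (limFun B x) • (ContinuousMap.evalCLM ℝ (lim B x : OnePoint (PsiSpace B)) -
      ContinuousMap.evalCLM ℝ OnePoint.infty) := by
    refine functional_ext (by simp [hone]) (fun a => by simp [hpt a]) fun y => ?_
    rcases eq_or_ne y x with rfl | hy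
    · simp
    · simp [hlim y hy, hy.symm]
  rw [mul_comm]
  exact congrArg (fun ν : C(OnePoint (PsiSpace B), ℝ) →L[ℝ] ℝ => ν g) hμ

theorem sum_abs_limFun_mul_le_one {F : Finset I} {D T : Finset N}
    (hD : (F : Set I).PairwiseDisjoint fun y => B y \ D) (hDT : D ⊆ T)
    (z : OnePoint (PsiSpace B)) :
    ∑ y ∈ F, |(limFun B y * (1 - ∑ a ∈ T, ptFun B a)) z| ≤ 1 := by
  classical
  induction z using onePoint_rec with
  | infty => simp
  | pt a =>
    have hval : ∀ y, (limFun B y * (1 - ∑ a ∈ T, ptFun B a)) (pt B a) =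
        if a ∈ B y \ (T : Set N) then 1 else 0 := fun y => by
      by_cases haT : a ∈ T <;> simp [haT]
    simp_rw [hval]
    refine sum_abs_le_one_of_subsingleton_support (fun y _ => by split_ifs <;> simp)
      fun y hy hya z hz hza => ?_
    simp only [ne_eq, ite_eq_right_iff, one_ne_zero, imp_false, not_not] at hya hza
    exact hD.elim_set hy hz a ⟨hya.1, fun h => hya.2 (hDT h)⟩ ⟨hza.1, fun h => hza.2 (hDT h)⟩
  | lim x =>
    have hval : ∀ y, (limFun B y * (1 - ∑ a ∈ T, ptFun B a)) (lim B x) =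
        if x = y then 1 else 0 := by simp
    simp_rw [hval]
    refine sum_abs_le_one_of_subsingleton_support (fun y _ => by split_ifs <;> simp)
      fun y _ hyx z _ hzx => ?_
    simp only [ne_eq, ite_eq_right_iff, one_ne_zero, imp_false, not_not] at hyx hzx
    exact hyx.symm.trans hzx

variable (μ)

theorem absSumLE_apply_ptFun : AbsSumLE ‖μ‖ fun a => μ (ptFun B a) := fun F => by
  classical
  refine sum_abs_apply_le_opNorm μ fun z => ?_
  induction z using onePoint_rec with
  | pt b =>
    refine sum_abs_le_one_of_subsingleton_support (fun a _ => ?_) fun a _ ha a' _ ha' => ?_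
    · by_cases h : b = a <;> simp [h]
    · simp only [ptFun_pt, ne_eq, ite_eq_right_iff, one_ne_zero, imp_false, not_not] at ha ha'
      exact ha.symm.trans ha'
  | _ => simp

/-- The mass which the measure representing `μ` has at the limit point of `B y`. -/
noncomputable def limMass (y : I) : ℝ := μ (limFun B y) - ∑' a : B y, μ (ptFun B a)

theorem limMass_add_tsum (y : I) :
    limMass μ y + ∑' a : B y, μ (ptFun B a) = μ (limFun B y) := sub_add_cancel _ _

/-- The values `limMass μ y` are limits of the values of `μ` at the indicator functions of the sets
`B y` without a large finite set `T`, and finitely many of these sets are disjoint for large `T`. -/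
theorem absSumLE_limMass : AbsSumLE ‖μ‖ (limMass μ) := fun F => by
  classical
  obtain ⟨D, hD⟩ := IsAlmostDisjoint.exists_pairwiseDisjoint_sdiff ‹IsAlmostDisjoint B› F
  have happly : ∀ (T : Finset N) (y : I), μ (limFun B y * (1 - ∑ a ∈ T, ptFun B a)) =
      μ (limFun B y) - ∑ a ∈ T, (B y).indicator (fun a => μ (ptFun B a)) a := fun T y => by
    simp [mul_sub, Finset.mul_sum, mul_ptFun, indicator_apply, apply_ite μ]
  have hlim : ∀ y, Tendsto (fun T : Finset N => μ (limFun B y * (1 - ∑ a ∈ T, ptFun B a))) atTop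
      (𝓝 (limMass μ y)) := fun y => by
    simp_rw [happly, limMass, tsum_subtype (B y) fun a => μ (ptFun B a)]
    exact ((absSumLE_apply_ptFun μ).summable.indicator (B y)).hasSum.const_sub _
  refine le_of_tendsto (tendsto_finsetSum F fun y _ => (hlim y).abs) ?_
  filter_upwards [eventually_ge_atTop D] with T hT
  exact sum_abs_apply_le_opNorm μ (sum_abs_limFun_mul_le_one hD hT)

theorem countable_support_limMass : (Function.support (limMass μ)).Countable :=
  (absSumLE_limMass μ).summable.countable_support

end Functional

end PsiSpace

/-! ### The copy of the space of null sequences -/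

theorem tendsto_atTop_zeroAtInfty (g : C₀(ℕ, ℝ)) : Tendsto g atTop (𝓝 0) := by
  simpa only [cocompact_eq_cofinite, Nat.cofinite_eq_atTop] using zero_at_infty g

/-- The linear isomorphism from the space of convergent sequences onto the space of null sequences
which splits a sequence into its limit, moved to the front, and its distance from the limit. -/
noncomputable def onePointNatLinearEquivZeroAtInfty : C(OnePoint ℕ, ℝ) ≃ₗ[ℝ] C₀(ℕ, ℝ) where
  toFun h :=
    { toFun n := n.casesOn (h OnePoint.infty) fun m => h m - h OnePoint.infty
      continuous_toFun := continuous_of_discreteTopology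
      zero_at_infty' := by
        rw [cocompact_eq_cofinite, Nat.cofinite_eq_atTop, ← tendsto_add_atTop_iff_nat 1]
        simpa using ((h.continuous.tendsto _).comp
          OnePoint.tendsto_coe_infty).sub_const (h OnePoint.infty) }
  invFun g := OnePoint.continuousMapMkNat (fun n => g 0 + g (n + 1)) (g 0) (by
    simpa using ((tendsto_add_atTop_iff_nat 1).mpr (tendsto_atTop_zeroAtInfty g)).const_add (g 0))
  map_add' g h := by
    ext (_ | n)
    · rfl
    · exact add_sub_add_comm _ _ _ _
  map_smul' c h := by
    ext (_ | n)
    · rfl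
    · exact (mul_sub c _ _).symm
  left_inv h := by
    ext z
    cases z with
    | infty => rfl
    | coe n => exact add_sub_cancel _ _
  right_inv g := by
    ext (_ | n)
    · rfl
    · exact add_sub_cancel_left _ _

/-- The space of convergent sequences is isomorphic to the space of null sequences. -/
noncomputable def onePointNatEquivZeroAtInfty : C(OnePoint ℕ, ℝ) ≃L[ℝ] C₀(ℕ, ℝ) :=
  onePointNatLinearEquivZeroAtInfty.toContinuousLinearEquivOfBounds 2 2
    (fun h => (BoundedContinuousFunction.norm_le (by positivity)).mpr fun n => by
      have hle := h.norm_coe_le_norm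
      cases n with
      | zero => exact (hle _).trans (by linarith [norm_nonneg h])
      | succ n => exact (norm_sub_le _ _).trans (by linarith [hle n, hle OnePoint.infty]))
    (fun g => (ContinuousMap.norm_le _ (by positivity)).mpr fun z => by
      have hle : ∀ n, ‖g n‖ ≤ ‖g‖ := g.toBCF.norm_coe_le_norm
      cases z with
      | infty => exact (hle 0).trans (by linarith [norm_nonneg g])
      | coe n => exact (norm_add_le _ _).trans (by linarith [hle 0, hle (n + 1)]))

theorem continuous_onePoint_of_isClopen_preimage {X N : Type*} [TopologicalSpace X]
    [TopologicalSpace N] [DiscreteTopology N] {f : X → OnePoint N}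
    (hf : ∀ n : N, IsClopen (f ⁻¹' {↑n})) : Continuous f := by
  refine continuous_def.mpr fun U hU => ?_
  by_cases h : OnePoint.infty ∈ U
  · have hfin : ((↑) ⁻¹' U : Set N)ᶜ.Finite :=
      isCompact_iff_finite.mp ((OnePoint.isOpen_iff_of_mem h).mp hU).2
    have hU' : f ⁻¹' U = (⋃ n ∈ ((↑) ⁻¹' U : Set N)ᶜ, f ⁻¹' {↑n})ᶜ := by
      ext z
      cases hz : f z <;> simp [hz, h, not_imp_not]
    rw [hU', isOpen_compl_iff]
    exact hfin.isClosed_biUnion fun n _ => (hf n).isClosed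
  · have hU' : f ⁻¹' U = ⋃ n ∈ ((↑) ⁻¹' U : Set N), f ⁻¹' {↑n} := by
      ext z
      cases hz : f z <;> simp [hz, h]
    rw [hU']
    exact isOpen_biUnion fun n _ => (hf n).isOpen

/-- The isometric embedding of spaces of continuous functions induced by a continuous surjection. -/
noncomputable def compSurjective {X Z : Type*} [TopologicalSpace X] [CompactSpace X]
    [TopologicalSpace Z] [CompactSpace Z] (φ : C(X, Z)) (hφ : Function.Surjective φ) :
    C(Z, ℝ) →ₗᵢ[ℝ] C(X, ℝ) where
  toLinearMap := (ContinuousMap.compRightAlgHom ℝ ℝ φ).toLinearMap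
  norm_map' g := by
    simp only [ContinuousMap.norm_eq_iSup_norm]
    exact hφ.iSup_comp (g := fun z => ‖g z‖)

namespace PsiSpace

section EvenSubspace

variable {I : Type*} {B : I → Set (ℕ × Bool)}

theorem isClopen_singleton_coe_pt (a : ℕ × Bool) : IsClopen {(pt B a : OnePoint (PsiSpace B))} := by
  rw [← image_singleton]
  exact ⟨OnePoint.isClosed_image_coe.mpr ⟨(isClopen_singleton_pt a).isClosed, isCompact_singleton⟩,
    OnePoint.isOpen_image_coe.mpr (isClopen_singleton_pt a).isOpen⟩

variable (B) in
/-- The map which identifies the isolated points `(n, true)` and `(n, false)` with each other and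
all the other points with infinity. -/
def collapseFun (z : OnePoint (PsiSpace B)) : OnePoint ℕ :=
  z.elim OnePoint.infty fun w => Sum.elim (fun a => (a.1 : OnePoint ℕ)) (fun _ => OnePoint.infty) w

@[simp] theorem collapseFun_infty : collapseFun B OnePoint.infty = OnePoint.infty := rfl

@[simp] theorem collapseFun_pt (a : ℕ × Bool) : collapseFun B (pt B a) = (a.1 : OnePoint ℕ) := rfl

@[simp] theorem collapseFun_lim (x : I) : collapseFun B (lim B x) = OnePoint.infty := rfl

theorem continuous_collapseFun : Continuous (collapseFun B) := by
  refine continuous_onePoint_of_isClopen_preimage fun n => ?_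
  have hpre : collapseFun B ⁻¹' {↑n} = {↑(pt B (n, true))} ∪ {↑(pt B (n, false))} := by
    ext z
    induction z using onePoint_rec with
    | pt a => rcases a with ⟨m, _ | _⟩ <;> simp
    | _ => simp
  rw [hpre]
  exact (isClopen_singleton_coe_pt _).union (isClopen_singleton_coe_pt _)

theorem collapseFun_surjective : Function.Surjective (collapseFun B) := fun n => by
  cases n with
  | infty => exact ⟨OnePoint.infty, rfl⟩
  | coe n => exact ⟨pt B (n, true), rfl⟩

variable (B) in
/-- Composition with `collapseFun B`. -/
noncomputable def compCollapse : C(OnePoint ℕ, ℝ) →ₗᵢ[ℝ] C(OnePoint (PsiSpace B), ℝ) :=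
  compSurjective ⟨collapseFun B, continuous_collapseFun⟩ collapseFun_surjective

@[simp] theorem coe_compCollapse (g : C(OnePoint ℕ, ℝ)) :
    ⇑(compCollapse B g) = g ∘ collapseFun B := rfl

variable (B) in
/-- The continuous functions on `OnePoint (PsiSpace B)` which take the same value at `(n, true)` and
`(n, false)` and are constant off the isolated points, as the image of `C(OnePoint ℕ, ℝ)`. -/
noncomputable def evenSubspace : Submodule ℝ C(OnePoint (PsiSpace B), ℝ) :=
  LinearMap.range (compCollapse B).toLinearMap

instance isClosed_evenSubspace : IsClosed (evenSubspace B : Set C(OnePoint (PsiSpace B), ℝ)) :=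
  (compCollapse B).isometry.isClosedEmbedding.isClosed_range

variable (B) in
/-- `evenSubspace B` is isomorphic to `c₀`. -/
noncomputable def evenSubspaceEquiv : evenSubspace B ≃L[ℝ] C₀(ℕ, ℝ) :=
  (compCollapse B).equivRange.symm.toContinuousLinearEquiv.trans
    onePointNatEquivZeroAtInfty

theorem one_mem_evenSubspace : 1 ∈ evenSubspace B := ⟨1, rfl⟩

theorem apply_pt_true_eq_apply_pt_false {h : C(OnePoint (PsiSpace B), ℝ)}
    (hh : h ∈ evenSubspace B) (n : ℕ) : h (pt B (n, true)) = h (pt B (n, false)) := by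
  obtain ⟨g, rfl⟩ := hh
  rfl

variable [IsAlmostDisjoint B]

theorem ptFun_true_add_ptFun_false_mem (n : ℕ) :
    ptFun B (n, true) + ptFun B (n, false) ∈ evenSubspace B := by
  classical
  refine ⟨indicatorFun ⟨⟨{n}, isCompact_singleton⟩, isOpen_discrete _⟩, ext_onePoint ?_ ?_ ?_⟩
  · simp
  · rintro ⟨m, _ | _⟩ <;> simp [indicator_apply]
  · simp

theorem apply_ptFun_false {μ : C(OnePoint (PsiSpace B), ℝ) →L[ℝ] ℝ}
    (hμ : ∀ h ∈ evenSubspace B, μ h = 0) (n : ℕ) :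
    μ (ptFun B (n, false)) = -μ (ptFun B (n, true)) := by
  rw [eq_neg_iff_add_eq_zero, add_comm, ← map_add]
  exact hμ _ (ptFun_true_add_ptFun_false_mem n)

theorem half_le_norm_mk_ptFun (n : ℕ) :
    1 / 2 ≤ ‖(evenSubspace B).mkQL (ptFun B (n, true))‖ := by
  refine le_of_forall_pos_lt_add fun ε hε => ?_
  obtain ⟨h, hmk, hlt⟩ := Submodule.Quotient.norm_mk_lt
    ((evenSubspace B).mkQL (ptFun B (n, true))) hε
  refine lt_of_le_of_lt ?_ hlt
  have heven := apply_pt_true_eq_apply_pt_false ((Submodule.Quotient.eq _).mp hmk) n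
  simp only [ContinuousMap.sub_apply, ptFun_pt, ↓reduceIte, Prod.mk.injEq, Bool.false_eq_true,
    and_false, sub_zero] at heven
  have htrue := abs_le.mp (h.norm_coe_le_norm (pt B (n, true)))
  have hfalse := abs_le.mp (h.norm_coe_le_norm (pt B (n, false)))
  linarith

end EvenSubspace

end PsiSpace

/-! ### Almost disjoint sets from sign sequences -/

theorem exists_enumeration_of_countable_support {I : Type*} {C : ℝ} (hC : 0 ≤ C)
    {ρ : ℕ → I → ℝ} (hρ : ∀ n y, |ρ n y| ≤ C)
    (hcount : ∀ n, (Function.support (ρ n)).Countable) :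
    ∃ b : ℕ → ℕ → ℝ, (∀ n m, |b n m| ≤ C) ∧ ∀ l : Filter ℕ,
      (∀ m, ConvergesAlong l fun n => b n m) → ∀ y, ConvergesAlong l fun n => ρ n y := by
  have hzero : ∀ (l : Filter ℕ) {y}, y ∉ ⋃ n, Function.support (ρ n) →
      ConvergesAlong l fun n => ρ n y := fun l y hy => by
    simp only [mem_iUnion, Function.mem_support, not_exists, not_not] at hy
    exact ⟨0, by simp only [hy, tendsto_const_nhds]⟩
  rcases (⋃ n, Function.support (ρ n)).eq_empty_or_nonempty with hempty | hne
  · exact ⟨0, by simpa using hC, fun l _ y => hzero l (hempty ▸ notMem_empty y)⟩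
  · obtain ⟨e, he⟩ := (countable_iUnion hcount).exists_eq_range hne
    refine ⟨fun n m => ρ n (e m), fun n m => hρ n (e m), fun l hl y => ?_⟩
    by_cases hy : y ∈ ⋃ n, Function.support (ρ n)
    · obtain ⟨m, rfl⟩ := he ▸ hy
      exact hl m
    · exact hzero l hy

section SignSets

variable {I : Type*} {f : I → ℕ → SignType}

/-- The set of the pairs `(n, true)` with `f x n = 1` and the pairs `(n, false)` with
`f x n = -1`, which encodes the sign sequence `f x`. -/
def signSets (f : I → ℕ → SignType) (x : I) : Set (ℕ × Bool) :=
  {a | f x a.1 = if a.2 then 1 else -1}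

theorem isAlmostDisjoint_signSets (hf : IsAlmostDisjoint fun x => Function.support (f x)) :
    IsAlmostDisjoint (signSets f) := by
  have hsupp : ∀ {x a}, a ∈ signSets f x → a.1 ∈ Function.support (f x) := fun {x a} ha h => by
    rw [signSets, mem_ofPred_eq, h] at ha
    split_ifs at ha
  exact ⟨fun x y hxy => ((hf.finite_inter hxy).prod finite_univ).subset fun a ha =>
    ⟨⟨hsupp ha.1, hsupp ha.2⟩, mem_univ _⟩⟩

theorem infinite_signSets {x : I} (hf : (Function.support (f x)).Infinite) :
    (signSets f x).Infinite := by
  refine Set.Infinite.of_image Prod.fst (hf.mono fun n hn => ?_)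
  cases hfn : f x n with
  | zero => exact absurd hfn hn
  | pos => exact ⟨(n, true), hfn, rfl⟩
  | neg => exact ⟨(n, false), hfn, rfl⟩

theorem tsum_signSets_eq_pairing {u : ℕ × Bool → ℝ} (hu : Summable u)
    (hodd : ∀ n, u (n, false) = -u (n, true)) (x : I) :
    ∑' a : signSets f x, u a = pairing (fun n => u (n, true)) (f x) := by
  rw [tsum_subtype, (hu.indicator _).tsum_prod, pairing]
  refine tsum_congr fun n => ?_
  rw [tsum_bool]
  cases h : f x n <;> simp [signSets, h, hodd]

end SignSets

/-! ### The quotient -/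

namespace PsiSpace

section Quotient

variable {I : Type*} {f : I → ℕ → SignType} [IsAlmostDisjoint (signSets f)]

theorem limMass_add_pairing {μ : C(OnePoint (PsiSpace (signSets f)), ℝ) →L[ℝ] ℝ}
    (hμ : ∀ h ∈ evenSubspace (signSets f), μ h = 0) (y : I) :
    limMass μ y + pairing (fun n => μ (ptFun _ (n, true))) (f y) = μ (limFun _ y) := by
  rw [← limMass_add_tsum, tsum_signSets_eq_pairing (u := fun a => μ (ptFun _ a))
    (absSumLE_apply_ptFun μ).summable (apply_ptFun_false hμ)]

theorem exists_trisection_tendsto {μ : ℕ → C(OnePoint (PsiSpace (signSets f)), ℝ) →L[ℝ] ℝ}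
    (hμ : ∀ n, ∀ h ∈ evenSubspace (signSets f), μ n h = 0) {M : ℝ} (hM : ∀ n, ‖μ n‖ ≤ M)
    {c : ℝ} (hc : 0 < c) (hcμ : ∀ n, c ≤ |μ n (ptFun _ (n, true))|) (hf : IsDiagonalizing f) :
    ∃ (x : I) (s : Trisection),
      (∃ v : SignType → ℝ, StrictMono v ∧
        ∀ i, Tendsto (fun n => μ n (limFun _ x)) (s.ultra i) (𝓝 (v i))) ∧
      (∀ a, ConvergesAlong s.filter fun n => μ n (ptFun _ a)) ∧
      ∀ y ≠ x, ConvergesAlong s.filter fun n => μ n (limFun _ y) := by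
  obtain ⟨b, hbM, hb⟩ := exists_enumeration_of_countable_support
    ((norm_nonneg (μ 0)).trans (hM 0))
    (fun n y => ((absSumLE_limMass (μ n)).mono (hM n)).abs_apply_le y)
    fun n => countable_support_limMass (μ n)
  have hadm : IsAdmissible (fun n m => μ n (ptFun _ (m, true))) b :=
    ⟨M, c, hc, fun n => ((absSumLE_apply_ptFun (μ n)).mono (hM n)).comp_injective
      (Prod.mk_left_injective true), hbM, hcμ⟩
  obtain ⟨x, s, hsx, hs, hne⟩ := hf _ _ hadm
  have hmass := hb s.filter hs.convergesAlong_right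
  refine ⟨x, s, ?_, ?_, fun y hy => ?_⟩
  · obtain ⟨v, hv, hlim⟩ := hs.exists_strictMono
    obtain ⟨w, hw⟩ := hmass x
    refine ⟨fun i => w + v i, hv.const_add w, fun i => ?_⟩
    refine ((hw.mono_left (s.ultra_le_filter i)).add (hlim i)).congr fun n => ?_
    rw [hsx, limMass_add_pairing (hμ n)]
  · rintro ⟨m, _ | _⟩
    · obtain ⟨v, hv⟩ := hs.convergesAlong_left m
      exact ⟨-v, hv.neg.congr fun n => (apply_ptFun_false (hμ n) m).symm⟩
    · exact hs.convergesAlong_left m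
  · obtain ⟨v, hv⟩ := hne y hy
    obtain ⟨w, hw⟩ := hmass y
    exact ⟨w + v, (hw.add hv).congr fun n => limMass_add_pairing (hμ n) y⟩

variable {K : Type*} [TopologicalSpace K] [CompactSpace K]
  {S : C(OnePoint (PsiSpace (signSets f)), ℝ) →L[ℝ] C(K, ℝ)} {c : ℝ}

/-- The points are limits of a sequence along the ultrafilters of a trisection, so that they are
separated by the image of the indicator function at `x` and of no other basic function. -/
theorem exists_points_apply_sub_eq (hS : ∀ h ∈ evenSubspace (signSets f), S h = 0) (hc : 0 < c)
    (hSc : ∀ n, c ≤ ‖S (ptFun _ (n, true))‖) (hf : IsDiagonalizing f) :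
    ∃ (x : I) (k : SignType → K), StrictMono (fun i => S (limFun _ x) (k i)) ∧ ∀ g i j,
      S g (k i) - S g (k j) =
        (g (lim (signSets f) x) - g OnePoint.infty) *
          (S (limFun _ x) (k i) - S (limFun _ x) (k j)) := by
  choose κ hκ using fun n =>
    exists_lt_abs_apply (half_pos hc).le ((half_lt_self hc).trans_le (hSc n))
  have hμ : ∀ z : K, ∀ h ∈ evenSubspace (signSets f),
      ((ContinuousMap.evalCLM ℝ z).comp S) h = 0 := fun z h hh => by simp [hS h hh]
  have hnorm : ∀ n, ‖(ContinuousMap.evalCLM ℝ (κ n)).comp S‖ ≤ ‖S‖ := fun n =>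
    ContinuousLinearMap.opNorm_le_bound _ (norm_nonneg S) fun h =>
      ((S h).norm_coe_le_norm (κ n)).trans (S.le_opNorm h)
  obtain ⟨x, s, ⟨v, hv, hx⟩, hpt, hlim⟩ :=
    exists_trisection_tendsto (fun n => hμ (κ n)) hnorm (half_pos hc) (fun n => (hκ n).le) hf
  have hcluster : ∀ i, ∃ z : K, Tendsto κ (s.ultra i) (𝓝 z) := fun i => by
    obtain ⟨z, -, hz⟩ := isCompact_univ.ultrafilter_le_nhds ((s.ultra i).map κ) (by simp)
    exact ⟨z, hz⟩
  choose k hk using hcluster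
  have heval : ∀ g i, Tendsto (fun n => S g (κ n)) (s.ultra i) (𝓝 (S g (k i))) := fun g i =>
    ((S g).continuous.tendsto _).comp (hk i)
  have hconst : ∀ g, ConvergesAlong s.filter (fun n => S g (κ n)) →
      ∀ i j, S g (k i) - S g (k j) = 0 := by
    rintro g ⟨w, hw⟩ i j
    have hval : ∀ i, S g (k i) = w := fun i =>
      tendsto_nhds_unique (heval g i) (hw.mono_left (s.ultra_le_filter i))
    rw [hval, hval, sub_self]
  have hkv : ∀ i, S (limFun _ x) (k i) = v i := fun i => tendsto_nhds_unique (heval _ i) (hx i)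
  refine ⟨x, k, by simpa only [hkv] using hv, fun g i j => ?_⟩
  exact apply_eq_of_apply_limFun_eq_zero
    (μ := (ContinuousMap.evalCLM ℝ (k i)).comp S - (ContinuousMap.evalCLM ℝ (k j)).comp S)
    (by simp [hS 1 one_mem_evenSubspace]) (fun a => hconst _ (hpt a) i j)
    (fun y hy => hconst _ (hlim y hy) i j) g

/-- The function `|S (limFun x) - S (limFun x) (k 0)|` is in the range of no such operator: its
differences at the points `k i` would determine the same factor as `1` and as `-1`. -/
theorem not_surjective_of_evenSubspace_le_ker (hS : ∀ h ∈ evenSubspace (signSets f), S h = 0)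
    (hc : 0 < c) (hSc : ∀ n, c ≤ ‖S (ptFun _ (n, true))‖) (hf : IsDiagonalizing f) :
    ¬ Function.Surjective S := by
  intro hsurj
  obtain ⟨x, k, hk, hdiff⟩ := exists_points_apply_sub_eq hS hc hSc hf
  have hneg : S (limFun _ x) (k (-1)) < S (limFun _ x) (k 0) := hk (by decide)
  have hpos : S (limFun _ x) (k 0) < S (limFun _ x) (k 1) := hk (by decide)
  obtain ⟨g, hg⟩ := hsurj ⟨fun z => |S (limFun _ x) z - S (limFun _ x) (k 0)|, by fun_prop⟩
  have hval : ∀ z, S g z = |S (limFun _ x) z - S (limFun _ x) (k 0)| := fun z => by rw [hg]; rfl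
  have hone := hdiff g 1 0
  have hminus := hdiff g (-1) 0
  rw [hval, hval, sub_self, abs_zero, sub_zero] at hone hminus
  rw [abs_of_pos (sub_pos.mpr hpos), eq_comm, mul_eq_right₀ (sub_pos.mpr hpos).ne'] at hone
  rw [hone, one_mul, abs_of_neg (sub_neg.mpr hneg)] at hminus
  linarith

theorem not_isCSpace_quotient_evenSubspace (hf : IsDiagonalizing f) :
    ¬ IsCSpace (C(OnePoint (PsiSpace (signSets f)), ℝ) ⧸ evenSubspace (signSets f)) := by
  rintro ⟨K, _, _, _, ⟨T⟩⟩
  have hT : ∀ n, 1 / 2 ≤ ‖T.symm.toContinuousLinearMap‖ *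
      ‖T ((evenSubspace (signSets f)).mkQL (ptFun _ (n, true)))‖ := fun n =>
    (half_le_norm_mk_ptFun n).trans <| by
      simpa using T.symm.toContinuousLinearMap.le_opNorm
        (T ((evenSubspace (signSets f)).mkQL (ptFun _ (n, true))))
  have hpos : 0 < ‖T.symm.toContinuousLinearMap‖ :=
    pos_of_mul_pos_left (half_pos one_pos |>.trans_le (hT 0)) (norm_nonneg _)
  refine not_surjective_of_evenSubspace_le_ker
    (S := T.toContinuousLinearMap.comp (evenSubspace (signSets f)).mkQL) (fun h hh => ?_)
    (div_pos (half_pos one_pos) hpos) (fun n => (div_le_iff₀' hpos).mpr (hT n)) hf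
    (T.surjective.comp (Submodule.mkQ_surjective _))
  exact (congrArg T ((Submodule.Quotient.mk_eq_zero _).mpr hh)).trans (map_zero T)

end Quotient

end PsiSpace

/-- There exist a separable scattered compact Hausdorff space `L` and a closed subspace
`Y` of `C(L)` isomorphic to `c₀` such that the quotient `C(L)/Y` is not a C-space.
(Here `c₀` is realized as `C₀(ℕ, ℝ)`, the space of real sequences vanishing at
infinity.) -/
theorem statement18 :
    ∃ (L : Type) (_ : TopologicalSpace L) (_ : CompactSpace L) (_ : T2Space L),
      TopologicalSpace.SeparableSpace L ∧ IsScatteredSpace L ∧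
      ∃ (Y : Submodule ℝ C(L, ℝ)) (_ : IsClosed (Y : Set C(L, ℝ))),
        Nonempty (↥Y ≃L[ℝ] C₀(ℕ, ℝ)) ∧ ¬ IsCSpace (C(L, ℝ) ⧸ Y) := by
  obtain ⟨I, f, hdisj, hinf, hf⟩ := exists_diagonalizing_family
  have := isAlmostDisjoint_signSets hdisj
  have := PsiSpace.separableSpace fun x => infinite_signSets (hinf x)
  exact ⟨OnePoint (PsiSpace (signSets f)), inferInstance, inferInstance, inferInstance,
    separableSpace_onePoint _, PsiSpace.isScatteredSpace.onePoint,
    PsiSpace.evenSubspace _, inferInstance,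
    ⟨PsiSpace.evenSubspaceEquiv _⟩, PsiSpace.not_isCSpace_quotient_evenSubspace hf⟩
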